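/- There exist universal constants c ∈ (0,1/4) and κ ∈ [2,∞) with the following properties. Let q ∈ [2,∞), n ∈ ℕ, and let (X,‖·‖_X) and (Y,‖·‖_Y) be Banach spaces with dim(X)=n and m_q(Y)<∞. Let |·| be any Hilbertian norm on X, identifying X with ℝ^n. Set K := κ·n^{1/4}·m_q(Y)·√(I_q(X)M(X)) and T := c/(n^{5/4}·√(I_q(X)M(X)·log n)). Then T ≤ 1/(2n), and for every 1-Lipschitz function f:B_X→Y and every r ∈ (0,T²]: (1/log(T/r)) ∫_r^T [ fint_{x ∈ (1−1/(2n))B_X} inf_{Λ ∈ A(X,Y), ‖Λ‖_{Lip(X,Y)}≤2} ρ^{−q} · fint_{x+ρB_X} ‖f(y)−Λ(y)‖_Y^q dy dx ] dρ/ρ ≤ (9Kn)^q / |log r|. -/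

import Mathlib

open MeasureTheory Metric Set ENNReal

noncomputable section

universe u

/-- `N` is a norm on the real vector space `V`. -/
def IsNorm {V : Type*} [AddCommGroup V] [Module ℝ V] (N : V → ℝ) : Prop :=
  (∀ x, N x = 0 → x = 0) ∧ (∀ (a : ℝ) (x : V), N (a • x) = |a| * N x) ∧
    (∀ x y : V, N (x + y) ≤ N x + N y)

/-- `m` is an upper bound for the martingale cotype `q` constant `𝔪_q(Y)` of `Y`. -/
def MartCotypeBound (q : ℝ) (Y : Type*) [NormedAddCommGroup Y] [NormedSpace ℝ Y]
    [CompleteSpace Y] (m : ℝ) : Prop :=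
  ∀ (Ω : Type) [MeasurableSpace Ω] (μ : Measure Ω) [IsProbabilityMeasure μ]
    (ℱ : Filtration ℕ ‹MeasurableSpace Ω›) (M : ℕ → Ω → Y), Martingale M ℱ μ →
    ∀ B : ℝ≥0∞, (∀ k, ∫⁻ ω, (‖M k ω‖₊ : ℝ≥0∞) ^ q ∂μ ≤ B) →
      ∑' k : ℕ, ∫⁻ ω, (‖M (k + 1) ω - M k ω‖₊ : ℝ≥0∞) ^ q ∂μ ≤ ENNReal.ofReal m ^ q * B

/-- The average of `N` over the Euclidean unit sphere (the quantity `M(X)`). -/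
def MX {n : ℕ} (N : EuclideanSpace ℝ (Fin n) → ℝ) : ℝ :=
  ⨍ σ : sphere (0 : EuclideanSpace ℝ (Fin n)) 1, N σ
    ∂((volume : Measure (EuclideanSpace ℝ (Fin n))).toSphere)

/-- The quantity `I_q(X) = (⨍_{B_X} |x|^q dx)^{1/q}`. -/
def IqX {n : ℕ} (q : ℝ) (N : EuclideanSpace ℝ (Fin n) → ℝ) : ℝ :=
  (⨍ x in {x : EuclideanSpace ℝ (Fin n) | N x ≤ 1}, ‖x‖ ^ q) ^ (1 / q)

/-- `log n`, interpreted as `1` when `n = 1`. -/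
def plog (n : ℕ) : ℝ := if n = 1 then 1 else Real.log n

/-!
The slopes of a Lipschitz map over random nested dyadic intervals, selected by coin tosses, form a
bounded martingale whose increments are second differences at dyadic scales. Hence martingale cotype
bounds the sum over these scales of the normalized `L_q` norms of the second differences along a
segment. Integrating over lines, then over the increment and the scale, gives, for the unit ball `B`
of an `n`-dimensional space, a bound on the second differences of `F` with increment `ρ n v`, where
`v` is the sum of two independent uniform points of `B`, integrated against `dρ / ρ`.

At scale `ρ` the map `F` is compared with the first order Taylor polynomial of `ψ ∗ ψ ∗ F`, where
`ψ` is an even kernel supported in `ρ n B`. Enlarging `ρ n B` to `ρ n B + ρ B` costs a constant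
factor in volume, which is why the smoothing scale is `n` times the approximation scale: the
derivatives of `ψ` in directions of `ρ B` are bounded by a multiple of the uniform density.
Since these derivatives are odd and `ψ` is even, the error is an average of second differences of
`F` with increments in `ρ n B + ρ n B`.

For points of `(1 - 1 / (2 n)) B` these second differences only involve `F` on `B` when `ρ` is at
most `1 / (32 n²)`. On `[1 / (32 n²), 1 / (2 n)]` approximation by constants suffices, because this
interval has logarithmic length `log (16 n)`.

The last ingredient is the lower bound `I_q(X) M(X) ≥ 1 / 16`: by Markov's inequality on the sphere
and polar coordinates, a definite part of `B_X` lies far from the origin when `M(X)` is small.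
-/

namespace Dorronsoro

open Module (finrank)

section MeanWidth

open scoped Pointwise

lemma half_measureReal_univ_le_lt_two_mul_average {α : Type*} [MeasurableSpace α] {ν : Measure α}
    [IsFiniteMeasure ν] {g : α → ℝ} (hg0 : 0 ≤ g) (hg : Integrable g ν) (hpos : 0 < ⨍ x, g x ∂ν) :
    ν.real univ / 2 ≤ ν.real {x | g x < 2 * ⨍ y, g y ∂ν} := by
  have hmarkov := mul_meas_ge_le_integral_of_nonneg (.of_forall hg0) hg (2 * ⨍ y, g y ∂ν)
  rw [← measure_smul_average, smul_eq_mul] at hmarkov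
  set A := ⨍ y, g y ∂ν
  have hcompl : {x | g x < 2 * A} = {x | 2 * A ≤ g x}ᶜ := by ext; simp
  rw [hcompl, measureReal_compl₀ (nullMeasurableSet_le aemeasurable_const hg.aemeasurable)]
  nlinarith

lemma half_le_average_of_measureReal_lt_le {α : Type*} [MeasurableSpace α] {ν : Measure α}
    [IsFiniteMeasure ν] [NeZero ν] {g : α → ℝ} (hg0 : 0 ≤ g) (hg : Integrable g ν) {a : ℝ}
    (ha : 0 ≤ a) (h : ν.real {x | g x < a} ≤ ν.real univ / 2) : a / 2 ≤ ⨍ x, g x ∂ν := by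
  have hmarkov := mul_meas_ge_le_integral_of_nonneg (.of_forall hg0) hg a
  have hcompl : {x | a ≤ g x} = {x | g x < a}ᶜ := by ext; simp
  rw [hcompl, measureReal_compl₀ (nullMeasurableSet_lt hg.aemeasurable aemeasurable_const)]
    at hmarkov
  rw [average_eq, smul_eq_mul, ← div_eq_inv_mul, le_div_iff₀ measureReal_univ_pos]
  nlinarith

variable {E X : Type*} [NormedAddCommGroup E] [NormedSpace ℝ E] [FiniteDimensional ℝ E]
  [NormedAddCommGroup X] [NormedSpace ℝ X] (e : E ≃L[ℝ] X)

lemma isCompact_norm_le_one : IsCompact {x | ‖e x‖ ≤ 1} := by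
  have : FiniteDimensional ℝ X := e.toLinearEquiv.finiteDimensional
  have : ProperSpace X := FiniteDimensional.proper_real X
  have hpre : {x | ‖e x‖ ≤ 1} = e.toHomeomorph ⁻¹' closedBall 0 1 := by ext; simp
  rw [hpre, Homeomorph.isCompact_preimage]
  exact isCompact_closedBall 0 1

variable [MeasurableSpace E] [BorelSpace E] (μ : Measure E) [μ.IsAddHaarMeasure]

lemma integrable_norm_toSphere :
    Integrable (fun σ : sphere (0 : E) 1 ↦ ‖e σ‖) μ.toSphere :=
  Continuous.integrable_of_hasCompactSupport (by fun_prop) (.of_compactSpace _)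

lemma average_norm_toSphere_pos [Nontrivial E] :
    0 < ⨍ σ : sphere (0 : E) 1, ‖e σ‖ ∂μ.toSphere := by
  have : NeZero μ.toSphere := ⟨μ.toSphere_ne_zero⟩
  have hpos (σ : sphere (0 : E) 1) : 0 < ‖e σ‖ := by
    simpa using ne_zero_of_mem_unit_sphere σ
  rw [average_eq, smul_eq_mul]
  refine mul_pos (inv_pos.2 measureReal_univ_pos) ?_
  rw [integral_pos_iff_support_of_nonneg (fun σ ↦ (hpos σ).le) (integrable_norm_toSphere e μ),
    show Function.support (fun σ : sphere (0 : E) 1 ↦ ‖e σ‖) = univ by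
      ext σ; simp [(hpos σ).ne']]
  exact Measure.measure_univ_pos.2 (NeZero.ne _)

lemma half_ball_le_measureReal_cone [Nontrivial E] :
    μ.real (ball 0 1) / 2 ≤ μ.real (Ioo (0 : ℝ) 1 • (Subtype.val ''
      {σ : sphere (0 : E) 1 | ‖e σ‖ < 2 * ⨍ τ : sphere (0 : E) 1, ‖e τ‖ ∂μ.toSphere})) := by
  have h := half_measureReal_univ_le_lt_two_mul_average (ν := μ.toSphere)
    (g := fun σ ↦ ‖e σ‖) (fun _ ↦ norm_nonneg _) (integrable_norm_toSphere e μ)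
    (average_norm_toSphere_pos e μ)
  set S : Set (sphere (0 : E) 1) := {σ | ‖e σ‖ < 2 * ⨍ τ : sphere (0 : E) 1, ‖e τ‖ ∂μ.toSphere}
  have hS : MeasurableSet S := (isOpen_lt (by fun_prop) continuous_const).measurableSet
  have hcone : μ.toSphere.real S = finrank ℝ E * μ.real (Ioo (0 : ℝ) 1 • (Subtype.val '' S)) := by
    simp [measureReal_def, Measure.toSphere_apply' _ hS]
  rw [Measure.toSphere_real_apply_univ, hcone, mul_div_assoc] at h
  exact le_of_mul_le_mul_left h (by exact_mod_cast Module.finrank_pos)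

lemma pow_mul_half_ball_le_measureReal_norm_le_one [Nontrivial E] :
    (1 / (2 * ⨍ σ : sphere (0 : E) 1, ‖e σ‖ ∂μ.toSphere)) ^ finrank ℝ E *
      (μ.real (ball 0 1) / 2) ≤ μ.real {x | ‖e x‖ ≤ 1} := by
  have hhalf := half_ball_le_measureReal_cone e μ
  have hM := average_norm_toSphere_pos e μ
  set M := ⨍ σ : sphere (0 : E) 1, ‖e σ‖ ∂μ.toSphere
  set C : Set E := Ioo (0 : ℝ) 1 • (Subtype.val '' {σ : sphere (0 : E) 1 | ‖e σ‖ < 2 * M})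
  have hsub : (1 / (2 * M)) • C ⊆ {x | ‖e x‖ ≤ 1} := by
    rintro _ ⟨_, ⟨t, ht, _, ⟨σ, hσ : ‖e σ‖ < 2 * M, rfl⟩, rfl⟩, rfl⟩
    simp only [mem_ofPred_eq, map_smul, norm_smul, Real.norm_eq_abs, abs_of_pos ht.1]
    rw [abs_of_pos (by positivity), one_div, inv_mul_le_iff₀ (by positivity)]
    nlinarith [norm_nonneg (e σ), ht.1, ht.2]
  calc _ ≤ (1 / (2 * M)) ^ finrank ℝ E * μ.real C := by gcongr
    _ = μ.real ((1 / (2 * M)) • C) := by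
      rw [measureReal_def, measureReal_def, Measure.addHaar_smul, ENNReal.toReal_mul,
        abs_of_pos (by positivity), ENNReal.toReal_ofReal (by positivity)]
    _ ≤ _ := measureReal_mono hsub (isCompact_norm_le_one e).measure_ne_top

lemma measureReal_ball_quarter_le_half [Nontrivial E] :
    μ.real (ball (0 : E) (1 / (8 * ⨍ σ : sphere (0 : E) 1, ‖e σ‖ ∂μ.toSphere))) ≤
      μ.real {x | ‖e x‖ ≤ 1} / 2 := by
  have hvol := pow_mul_half_ball_le_measureReal_norm_le_one e μ
  have hM := average_norm_toSphere_pos e μ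
  set M := ⨍ σ : sphere (0 : E) 1, ‖e σ‖ ∂μ.toSphere
  have hpow : ((1 : ℝ) / 4) ^ finrank ℝ E ≤ 1 / 4 :=
    pow_le_of_le_one (by norm_num) (by norm_num) Module.finrank_pos.ne'
  calc μ.real (ball (0 : E) (1 / (8 * M)))
      = (1 / (8 * M)) ^ finrank ℝ E * μ.real (ball 0 1) := by
        rw [measureReal_def, measureReal_def, Measure.addHaar_ball _ _ (by positivity),
          ENNReal.toReal_mul, ENNReal.toReal_ofReal (by positivity)]
    _ = (1 / 4) ^ finrank ℝ E * ((1 / (2 * M)) ^ finrank ℝ E * μ.real (ball 0 1)) := by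
        rw [← mul_assoc, ← mul_pow]; congr 2; field_simp; norm_num
    _ ≤ 1 / 4 * (2 * μ.real {x | ‖e x‖ ≤ 1}) :=
        mul_le_mul hpow (by linarith) (by positivity) (by positivity)
    _ = _ := by ring

lemma inv_sixteen_le_moment_mul_average [Nontrivial E] {q : ℝ} (hq : 1 ≤ q) :
    1 / 16 ≤ (⨍ x in {x | ‖e x‖ ≤ 1}, ‖x‖ ^ q ∂μ) ^ (1 / q) *
      ⨍ σ : sphere (0 : E) 1, ‖e σ‖ ∂μ.toSphere := by
  have hball := measureReal_ball_quarter_le_half e μ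
  have hM := average_norm_toSphere_pos e μ
  set M := ⨍ σ : sphere (0 : E) 1, ‖e σ‖ ∂μ.toSphere
  set A : Set E := {x | ‖e x‖ ≤ 1}
  have hA : IsCompact A := isCompact_norm_le_one e
  have hq0 : 0 < q := by linarith
  have hmoment : (1 / (8 * M)) ^ q / 2 ≤ ⨍ x in A, ‖x‖ ^ q ∂μ := by
    have : Fact (μ A < ∞) := ⟨hA.measure_lt_top⟩
    have : NeZero (μ.restrict A) := ⟨by
      rw [Ne, Measure.restrict_eq_zero]
      exact (Measure.measure_pos_of_mem_nhds μ (x := 0)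
        ((continuous_norm.comp e.continuous).continuousAt.eventually_le_const (by simp))).ne'⟩
    refine half_le_average_of_measureReal_lt_le (fun x ↦ by positivity)
      ((by fun_prop (disch := linarith) : ContinuousOn _ A).integrableOn_compact hA)
      (by positivity) ?_
    rw [measureReal_restrict_apply_univ, measureReal_restrict_apply' hA.measurableSet]
    refine (measureReal_mono fun x hx ↦ ?_).trans hball
    exact mem_ball_zero_iff.2 ((Real.rpow_lt_rpow_iff (norm_nonneg x) (by positivity) hq0).1 hx.1)
  have hroot : 1 / (16 * M) ≤ (⨍ x in A, ‖x‖ ^ q ∂μ) ^ (1 / q) := by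
    rw [one_div q, Real.le_rpow_inv_iff_of_pos (by positivity)
      (le_trans (by positivity) hmoment) hq0]
    refine le_trans ?_ hmoment
    rw [show 1 / (16 * M) = 1 / (8 * M) * 2⁻¹ by field_simp; norm_num,
      Real.mul_rpow (by positivity) (by positivity), div_eq_mul_inv]
    exact mul_le_mul_of_nonneg_left
      (Real.rpow_le_self_of_le_one (x := 2⁻¹) (by norm_num) (by norm_num) hq) (by positivity)
  calc (1 : ℝ) / 16 = 1 / (16 * M) * M := by field_simp
    _ ≤ _ := by gcongr

end MeanWidth

/-- The symmetric second difference of `F` at `z` with step `v`. -/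
def secondDiff {E Y : Type*} [AddCommGroup E] [AddCommGroup Y] [Module ℝ Y] (F : E → Y) (v z : E) :
    Y :=
  F (z + v) + F (z - v) - (2 : ℝ) • F z

lemma secondDiff_comp_smul {E Y : Type*} [AddCommGroup E] [Module ℝ E] [AddCommGroup Y]
    [Module ℝ Y] (F : E → Y) (s : ℝ) (v z : E) :
    secondDiff (fun z ↦ F (s • z)) v z = secondDiff F (s • v) (s • z) := by
  simp only [secondDiff, smul_add, smul_sub]

lemma continuous_secondDiff {α E Y : Type*} [TopologicalSpace α] [AddCommGroup E]
    [TopologicalSpace E] [IsTopologicalAddGroup E] [AddCommGroup Y] [TopologicalSpace Y]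
    [IsTopologicalAddGroup Y] [Module ℝ Y] [ContinuousConstSMul ℝ Y] {F : E → Y}
    (hF : Continuous F) {v z : α → E} (hv : Continuous v) (hz : Continuous z) :
    Continuous fun a ↦ secondDiff F (v a) (z a) := by
  unfold secondDiff
  fun_prop

section CoinTossing

/-- The law of an infinite sequence of fair coin tosses. Toss `0` is not used: tosses `1, …, k` are
the binary digits that select a dyadic subinterval of `[0, 1]` of length `2⁻ᵏ`. -/
def coinMeasure : Measure (ℕ → Bool) :=
  .infinitePi fun _ ↦ (PMF.uniformOfFintype Bool).toMeasure

instance : IsProbabilityMeasure coinMeasure := by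
  unfold coinMeasure; infer_instance

/-- The sequence of coin tosses `ω` with the outcome of toss `k` reversed. -/
def flipCoin (k : ℕ) (ω : ℕ → Bool) : ℕ → Bool := fun i ↦ if i = k then !ω i else ω i

lemma measurePreserving_not :
    MeasurePreserving Bool.not (PMF.uniformOfFintype Bool).toMeasure
      (PMF.uniformOfFintype Bool).toMeasure := by
  refine ⟨.of_discrete, Measure.ext_of_singleton fun b ↦ ?_⟩
  have hpre : Bool.not ⁻¹' {b} = {!b} := by ext c; cases b <;> cases c <;> simp
  rw [Measure.map_apply .of_discrete (.of_discrete), hpre]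
  simp only [PMF.toMeasure_apply_singleton _ _ (MeasurableSet.of_discrete),
    PMF.uniformOfFintype_apply]

lemma measurePreserving_flipCoin (k : ℕ) :
    MeasurePreserving (flipCoin k) coinMeasure coinMeasure := by
  have hmeas (i : ℕ) : Measurable (if i = k then Bool.not else id) := .of_discrete
  have hflip : flipCoin k = fun ω i ↦ (if i = k then Bool.not else id) (ω i) := by
    ext ω i; by_cases h : i = k <;> simp [flipCoin, h]
  refine ⟨by rw [hflip]; fun_prop, ?_⟩
  rw [hflip, coinMeasure, Measure.infinitePi_map_pi _ hmeas]
  congr 1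
  ext1 i
  split_ifs
  · exact measurePreserving_not.map_eq
  · exact Measure.map_id

lemma preimage_flipCoin_of_measurableSet_piLE {k : ℕ} {s : Set (ℕ → Bool)}
    (hs : MeasurableSet[Filtration.piLE (X := fun _ ↦ Bool) k] s) :
    flipCoin (k + 1) ⁻¹' s = s := by
  rw [Filtration.piLE_eq_comap_frestrictLe] at hs
  obtain ⟨t, -, rfl⟩ := hs
  rw [← preimage_comp]
  congr 1
  ext ω i
  have hi := Finset.mem_Iic.1 i.2
  simp [flipCoin, show (i : ℕ) ≠ k + 1 by lia]

lemma stronglyMeasurable_piLE_of_dependsOn {X : ℕ → Type*} [∀ i, MeasurableSpace (X i)]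
    [∀ i, MeasurableSingletonClass (X i)] [∀ i, Finite (X i)] {Y : Type*} [TopologicalSpace Y]
    [Nonempty Y]
    {f : (Π i, X i) → Y} {k : ℕ} (hf : DependsOn f (Iic k)) :
    StronglyMeasurable[Filtration.piLE k] f := by
  obtain ⟨g, hg⟩ := (dependsOn_iff_exists_comp (s := (Finset.Iic k : Set ℕ))).1
    (by simpa using hf)
  rw [hg, Filtration.piLE_eq_comap_frestrictLe]
  exact (StronglyMeasurable.of_discrete (f := g)).comp_measurable
    (comap_measurable (Preorder.frestrictLe k))

lemma martingale_of_measurePreserving_neg {Ω : Type*} {mΩ : MeasurableSpace Ω} {P : Measure Ω}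
    [IsFiniteMeasure P] {ℱ : Filtration ℕ mΩ} {Y : Type*} [NormedAddCommGroup Y]
    [NormedSpace ℝ Y] [CompleteSpace Y] {M : ℕ → Ω → Y} (hadapt : StronglyAdapted ℱ M)
    (hint : ∀ k, Integrable (M k) P) (τ : ℕ → Ω → Ω) (hτ : ∀ k, MeasurePreserving (τ k) P P)
    (hτs : ∀ k s, MeasurableSet[ℱ k] s → τ k ⁻¹' s = s)
    (hneg : ∀ k ω, M (k + 1) (τ k ω) - M k (τ k ω) = -(M (k + 1) ω - M k ω)) :
    Martingale M ℱ P := by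
  refine martingale_of_setIntegral_eq_succ hadapt hint fun k s hs ↦ ?_
  set D : Ω → Y := fun ω ↦ M (k + 1) ω - M k ω
  have hD : Integrable D P := (hint (k + 1)).sub (hint k)
  have hself : ∫ ω in s, D ω ∂P = -∫ ω in s, D ω ∂P :=
    calc ∫ ω in s, D ω ∂P = ∫ ω in s, D ω ∂(P.map (τ k)) := by rw [(hτ k).map_eq]
      _ = ∫ ω in τ k ⁻¹' s, D (τ k ω) ∂P :=
        setIntegral_map (ℱ.le k s hs) ((hτ k).map_eq.symm ▸ hD.aestronglyMeasurable)
          (hτ k).measurable.aemeasurable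
      _ = -∫ ω in s, D ω ∂P := by simp only [D, hτs k s hs, hneg, integral_neg]
  rw [eq_comm, ← sub_eq_zero, ← integral_sub (hint _).integrableOn (hint _).integrableOn]
  rw [eq_neg_iff_add_eq_zero, ← two_smul ℝ] at hself
  exact (smul_eq_zero_iff_right two_ne_zero).1 hself

/-- The left endpoint of the dyadic subinterval of `[0, 1]` of length `2⁻ᵏ` selected by the coin
tosses `1, …, k`. -/
def dyadicLeft (k : ℕ) (ω : ℕ → Bool) : ℝ :=
  ∑ i ∈ Finset.range k, if ω (i + 1) then (2⁻¹ : ℝ) ^ (i + 1) else 0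

lemma dyadicLeft_succ (k : ℕ) (ω : ℕ → Bool) :
    dyadicLeft (k + 1) ω = dyadicLeft k ω + if ω (k + 1) then (2⁻¹ : ℝ) ^ (k + 1) else 0 :=
  Finset.sum_range_succ _ _

lemma dyadicLeft_nonneg (k : ℕ) (ω : ℕ → Bool) : 0 ≤ dyadicLeft k ω :=
  Finset.sum_nonneg fun i _ ↦ by split_ifs <;> positivity

lemma inv_two_pow_eq_two_mul (k : ℕ) : (2⁻¹ : ℝ) ^ k = 2 * 2⁻¹ ^ (k + 1) := by
  rw [pow_succ]; ring

lemma dyadicLeft_add_le_one (k : ℕ) (ω : ℕ → Bool) : dyadicLeft k ω + 2⁻¹ ^ k ≤ 1 := by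
  induction k with
  | zero => simp [dyadicLeft]
  | succ k ih =>
    rw [inv_two_pow_eq_two_mul k] at ih
    have hpos : (0 : ℝ) < 2⁻¹ ^ (k + 1) := by positivity
    rw [dyadicLeft_succ]
    split_ifs <;> linarith

lemma dependsOn_dyadicLeft (k : ℕ) : DependsOn (dyadicLeft k) (Iic k) := fun ω ω' h ↦
  Finset.sum_congr rfl fun i hi ↦ by rw [h (i + 1) (by simpa using hi)]

lemma dyadicLeft_flipCoin (k : ℕ) (ω : ℕ → Bool) :
    dyadicLeft k (flipCoin (k + 1) ω) = dyadicLeft k ω :=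
  dependsOn_dyadicLeft k fun i hi ↦ if_neg (by have := mem_Iic.1 hi; lia)

lemma measurable_dyadicLeft (k : ℕ) : Measurable (dyadicLeft k) :=
  (stronglyMeasurable_piLE_of_dependsOn (dependsOn_dyadicLeft k)).measurable.mono
    (Filtration.le _ k) le_rfl

/-- The midpoint of the dyadic subinterval of `[0, 1]` of length `2⁻ᵏ` selected by the coin
tosses `1, …, k`. -/
def dyadicMid (k : ℕ) (ω : ℕ → Bool) : ℝ := dyadicLeft k ω + 2⁻¹ ^ (k + 1)

lemma dyadicMid_mem_Icc (k : ℕ) (ω : ℕ → Bool) : dyadicMid k ω ∈ Icc 0 1 := by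
  have h0 := dyadicLeft_nonneg k ω
  have h1 := dyadicLeft_add_le_one k ω
  have hpos : (0 : ℝ) < 2⁻¹ ^ (k + 1) := by positivity
  rw [inv_two_pow_eq_two_mul k] at h1
  exact ⟨add_nonneg h0 hpos.le, by rw [dyadicMid]; linarith⟩

lemma measurable_dyadicMid (k : ℕ) : Measurable (dyadicMid k) :=
  (measurable_dyadicLeft k).add_const _

variable {Y : Type*} [NormedAddCommGroup Y] [NormedSpace ℝ Y]

/-- The slope of `φ` over the random dyadic interval of length `2⁻ᵏ`. -/
def dyadicSlope (φ : ℝ → Y) (k : ℕ) (ω : ℕ → Bool) : Y :=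
  (2 : ℝ) ^ k • (φ (dyadicLeft k ω + 2⁻¹ ^ k) - φ (dyadicLeft k ω))

lemma dyadicSlope_succ_sub (φ : ℝ → Y) (k : ℕ) (ω : ℕ → Bool) :
    dyadicSlope φ (k + 1) ω - dyadicSlope φ k ω = (if ω (k + 1) then (1 : ℝ) else -1) •
      (2 : ℝ) ^ k • secondDiff φ (2⁻¹ ^ (k + 1)) (dyadicMid k ω) := by
  have hleft : dyadicLeft k ω + 2⁻¹ ^ (k + 1) - 2⁻¹ ^ (k + 1) = dyadicLeft k ω := by ring
  have hright : dyadicLeft k ω + 2⁻¹ ^ (k + 1) + 2⁻¹ ^ (k + 1) = dyadicLeft k ω + 2⁻¹ ^ k := by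
    rw [inv_two_pow_eq_two_mul k]; ring
  simp only [dyadicSlope, secondDiff, dyadicMid, dyadicLeft_succ, hleft, pow_succ (2 : ℝ) k]
  by_cases h : ω (k + 1)
  · simp only [h, if_true, hright]
    module
  · simp only [h, Bool.false_eq_true, if_false, add_zero, hright]
    module

lemma norm_dyadicSlope_le {φ : ℝ → Y} {L : NNReal} (hφ : LipschitzOnWith L φ (Icc 0 1)) (k : ℕ)
    (ω : ℕ → Bool) : ‖dyadicSlope φ k ω‖ ≤ L := by
  have h0 := dyadicLeft_nonneg k ω
  have h1 := dyadicLeft_add_le_one k ω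
  have hpos : (0 : ℝ) < 2⁻¹ ^ k := by positivity
  have hdiff := hφ.norm_sub_le (x := dyadicLeft k ω + 2⁻¹ ^ k) (y := dyadicLeft k ω)
    ⟨by linarith, h1⟩ ⟨h0, by linarith⟩
  rw [add_sub_cancel_left, Real.norm_of_nonneg hpos.le] at hdiff
  calc ‖dyadicSlope φ k ω‖
      = 2 ^ k * ‖φ (dyadicLeft k ω + 2⁻¹ ^ k) - φ (dyadicLeft k ω)‖ := by
        rw [dyadicSlope, norm_smul, norm_pow, Real.norm_two]
    _ ≤ 2 ^ k * (L * 2⁻¹ ^ k) := by gcongr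
    _ = L := by rw [mul_left_comm, ← mul_pow]; norm_num

lemma stronglyAdapted_dyadicSlope (φ : ℝ → Y) :
    StronglyAdapted (Filtration.piLE (X := fun _ ↦ Bool)) (dyadicSlope φ) := fun k ↦
  stronglyMeasurable_piLE_of_dependsOn fun ω ω' h ↦ by
    simp only [dyadicSlope, dependsOn_dyadicLeft k h]

lemma martingale_dyadicSlope [CompleteSpace Y] {φ : ℝ → Y} {L : NNReal}
    (hφ : LipschitzOnWith L φ (Icc 0 1)) :
    Martingale (dyadicSlope φ) Filtration.piLE coinMeasure := by
  refine martingale_of_measurePreserving_neg (stronglyAdapted_dyadicSlope φ) (fun k ↦ ?_)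
    (fun k ↦ flipCoin (k + 1)) (fun k ↦ measurePreserving_flipCoin (k + 1))
    (fun k s hs ↦ preimage_flipCoin_of_measurableSet_piLE hs) fun k ω ↦ ?_
  · exact .of_bound
      ((stronglyAdapted_dyadicSlope φ k).mono (Filtration.le _ k)).aestronglyMeasurable
      L (.of_forall (norm_dyadicSlope_le hφ k))
  · rw [dyadicSlope_succ_sub, dyadicSlope_succ_sub, dyadicMid, dyadicLeft_flipCoin, ← dyadicMid]
    cases h : ω (k + 1) <;> simp [flipCoin, h]

variable [CompleteSpace Y] {q m : ℝ}

lemma tsum_lintegral_secondDiff_dyadic_le (hq : 0 ≤ q) (hm : MartCotypeBound q Y m) {φ : ℝ → Y}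
    {L : NNReal} (hφ : LipschitzOnWith L φ (Icc 0 1)) :
    ∑' k : ℕ, ((2 : ℝ≥0∞) ^ k) ^ q *
        ∫⁻ ω, ‖secondDiff φ (2⁻¹ ^ (k + 1)) (dyadicMid k ω)‖ₑ ^ q ∂coinMeasure
      ≤ ENNReal.ofReal m ^ q * L ^ q := by
  have hbound (k : ℕ) : ∫⁻ ω, ‖dyadicSlope φ k ω‖ₑ ^ q ∂coinMeasure ≤ L ^ q :=
    calc ∫⁻ ω, ‖dyadicSlope φ k ω‖ₑ ^ q ∂coinMeasure ≤ ∫⁻ _, (L : ℝ≥0∞) ^ q ∂coinMeasure := by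
          gcongr with ω
          exact enorm_le_coe.2 (norm_dyadicSlope_le hφ k ω)
      _ = L ^ q := by simp
  refine le_trans (ENNReal.tsum_le_tsum fun k ↦ le_of_eq ?_)
    (hm _ coinMeasure _ _ (martingale_dyadicSlope hφ) _ hbound)
  rw [← lintegral_const_mul' _ _ (by finiteness)]
  refine lintegral_congr fun ω ↦ ?_
  rw [← enorm_eq_nnnorm, dyadicSlope_succ_sub, enorm_smul, enorm_smul,
    ENNReal.mul_rpow_of_nonneg _ _ hq, ENNReal.mul_rpow_of_nonneg _ _ hq]
  have hsign : ‖if ω (k + 1) then (1 : ℝ) else -1‖ₑ = 1 := by split_ifs <;> simp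
  have hpow : ‖(2 : ℝ) ^ k‖ₑ = 2 ^ k := by
    rw [enorm_pow, ← ofReal_norm, Real.norm_two, ENNReal.ofReal_ofNat]
  rw [hsign, hpow, ENNReal.one_rpow, one_mul]

lemma one_le_of_martCotypeBound [Nontrivial Y] (hq : 0 < q) (hm : MartCotypeBound q Y m) :
    1 ≤ m := by
  obtain ⟨y, hy⟩ := exists_ne (0 : Y)
  have hφ : LipschitzOnWith ‖y‖₊ (fun t : ℝ ↦ |t - 2⁻¹| • y) (Icc 0 1) :=
    .of_dist_le_mul fun s _ t _ ↦ by
      rw [dist_eq_norm, ← sub_smul, norm_smul, mul_comm, dist_eq_norm]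
      gcongr
      · rfl
      · simpa using abs_abs_sub_abs_le (s - 2⁻¹) (t - 2⁻¹)
  have hfirst := (ENNReal.le_tsum 0).trans (tsum_lintegral_secondDiff_dyadic_le hq.le hm hφ)
  have hy' : secondDiff (fun t : ℝ ↦ |t - 2⁻¹| • y) 2⁻¹ 2⁻¹ = y := by
    norm_num [secondDiff, ← add_smul]
  simp only [dyadicMid, dyadicLeft, pow_zero, ENNReal.one_rpow, one_mul, Finset.range_zero,
    Finset.sum_empty, zero_add, pow_one, hy', lintegral_const, measure_univ, mul_one] at hfirst
  rw [← ENNReal.mul_rpow_of_nonneg _ _ hq.le, ENNReal.rpow_le_rpow_iff hq, enorm_eq_nnnorm]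
    at hfirst
  by_contra! hlt
  refine hfirst.not_gt ?_
  calc ENNReal.ofReal m * ‖y‖₊ < 1 * ‖y‖₊ := by
        gcongr
        · exact ENNReal.coe_ne_zero.2 (nnnorm_ne_zero_iff.2 hy)
        · finiteness
        · exact ENNReal.ofReal_lt_one.2 hlt
    _ = ‖y‖₊ := one_mul _

end CoinTossing

section SecondDifferenceSum

variable {E : Type*} [NormedAddCommGroup E]

section Line

variable [NormedSpace ℝ E]

lemma secondDiff_comp_add_smul {Y : Type*} [AddCommGroup Y] [Module ℝ Y] (F : E → Y) (x w : E)
    (s t : ℝ) : secondDiff (fun t ↦ F (x + t • w)) s t = secondDiff F (s • w) (x + t • w) := by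
  simp only [secondDiff, add_smul, sub_smul, add_assoc, add_sub_assoc]

lemma lipschitzOnWith_comp_add_smul {Y : Type*} [PseudoMetricSpace Y] {F : E → Y} {R : ℝ} {w x : E}
    (hF : LipschitzOnWith 1 F (closedBall 0 (R + ‖w‖))) (hx : ‖x‖ ≤ R) :
    LipschitzOnWith ‖w‖₊ (fun t : ℝ ↦ F (x + t • w)) (Icc 0 1) := by
  have hmem (t : ℝ) (ht : t ∈ Icc (0 : ℝ) 1) : x + t • w ∈ closedBall 0 (R + ‖w‖) := by
    rw [mem_closedBall_zero_iff]
    refine norm_add_le_of_le hx ?_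
    rw [norm_smul, Real.norm_of_nonneg ht.1]
    exact mul_le_of_le_one_left (norm_nonneg w) ht.2
  refine .of_dist_le_mul fun s hs t ht ↦ ?_
  refine (hF.dist_le_mul _ (hmem s hs) _ (hmem t ht)).trans_eq ?_
  rw [dist_add_left, dist_eq_norm, ← sub_smul, norm_smul, dist_eq_norm, NNReal.coe_one, one_mul,
    mul_comm, coe_nnnorm]

end Line

variable [MeasurableSpace E] [BorelSpace E] {μ : Measure E} [μ.IsAddRightInvariant]

lemma setLIntegral_le_setLIntegral_add_right {s t : Set E} (hs : MeasurableSet s)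
    (ht : MeasurableSet t) {w : E} (hst : ∀ z ∈ s, z - w ∈ t) (g : E → ℝ≥0∞) :
    ∫⁻ z in s, g z ∂μ ≤ ∫⁻ x in t, g (x + w) ∂μ := by
  rw [← lintegral_indicator hs, ← lintegral_indicator ht,
    ← lintegral_add_right_eq_self (s.indicator g) w]
  refine lintegral_mono fun x ↦ ?_
  by_cases hx : x + w ∈ s
  · have hxt : x ∈ t := by simpa using hst _ hx
    rw [indicator_of_mem hx, indicator_of_mem hxt]
  · rw [indicator_of_notMem hx]
    exact zero_le

lemma setLIntegral_closedBall_le_add_right {R ε : ℝ} {w : E} (hw : ‖w‖ ≤ ε) (g : E → ℝ≥0∞) :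
    ∫⁻ z in closedBall 0 R, g z ∂μ ≤ ∫⁻ x in closedBall 0 (R + ε), g (x + w) ∂μ :=
  setLIntegral_le_setLIntegral_add_right measurableSet_closedBall measurableSet_closedBall
    (fun z hz ↦ by
      rw [mem_closedBall_zero_iff] at hz ⊢
      exact (norm_sub_le z w).trans (add_le_add hz hw)) g

lemma setLIntegral_closedBall_le_lintegral_lintegral_add [SecondCountableTopology E] [SFinite μ]
    {Ω : Type*} [MeasurableSpace Ω] {P : Measure Ω} [IsProbabilityMeasure P] {R ε : ℝ} {c : Ω → E}
    (hc : Measurable c) (hcε : ∀ ω, ‖c ω‖ ≤ ε) {g : E → ℝ≥0∞} (hg : Measurable g) :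
    ∫⁻ z in closedBall 0 R, g z ∂μ ≤ ∫⁻ x in closedBall 0 (R + ε), ∫⁻ ω, g (x + c ω) ∂P ∂μ := by
  have hgc : Measurable fun p : Ω × E ↦ g (p.2 + c p.1) :=
    hg.comp (measurable_snd.add (hc.comp measurable_fst))
  rw [← lintegral_lintegral_swap hgc.aemeasurable, ← mul_one (∫⁻ _ in _, _ ∂μ),
    ← measure_univ (μ := P), ← lintegral_const]
  exact lintegral_mono fun ω ↦ setLIntegral_closedBall_le_add_right (hcε ω) _

variable [NormedSpace ℝ E] [FiniteDimensional ℝ E] [SFinite μ]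
  {Y : Type*} [NormedAddCommGroup Y] [NormedSpace ℝ Y] {F : E → Y} [CompleteSpace Y] {q m : ℝ}

lemma tsum_setLIntegral_secondDiff_le (hq : 0 ≤ q) (hm : MartCotypeBound q Y m)
    (hcont : Continuous F) {R : ℝ} {w : E}
    (hF : LipschitzOnWith 1 F (closedBall 0 (R + 2 * ‖w‖))) :
    ∑' k : ℕ, ((2 : ℝ≥0∞) ^ k) ^ q *
        ∫⁻ z in closedBall 0 R, ‖secondDiff F ((2⁻¹ : ℝ) ^ (k + 1) • w) z‖ₑ ^ q ∂μ
      ≤ ENNReal.ofReal m ^ q * ‖w‖ₑ ^ q * μ (closedBall 0 (R + ‖w‖)) := by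
  let g (k : ℕ) (z : E) : ℝ≥0∞ := ‖secondDiff F ((2⁻¹ : ℝ) ^ (k + 1) • w) z‖ₑ ^ q
  have hg (k : ℕ) : Measurable (g k) :=
    (continuous_secondDiff hcont continuous_const continuous_id).enorm.measurable.pow_const q
  let H (k : ℕ) (x : E) : ℝ≥0∞ := ∫⁻ ω, g k (x + dyadicMid k ω • w) ∂coinMeasure
  have hc (k : ℕ) : Measurable fun ω ↦ dyadicMid k ω • w := (measurable_dyadicMid k).smul_const w
  have hH (k : ℕ) : Measurable (H k) :=
    ((hg k).comp (measurable_snd.add ((hc k).comp measurable_fst))).lintegral_prod_left'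
  have hcw (k : ℕ) (ω : ℕ → Bool) : ‖dyadicMid k ω • w‖ ≤ ‖w‖ := by
    rw [norm_smul, Real.norm_of_nonneg (dyadicMid_mem_Icc k ω).1]
    exact mul_le_of_le_one_left (norm_nonneg w) (dyadicMid_mem_Icc k ω).2
  have hmartingale (x : E) (hx : x ∈ closedBall 0 (R + ‖w‖)) :
      ∑' k : ℕ, ((2 : ℝ≥0∞) ^ k) ^ q * H k x ≤ ENNReal.ofReal m ^ q * ‖w‖ₑ ^ q := by
    have hsum := tsum_lintegral_secondDiff_dyadic_le hq hm (lipschitzOnWith_comp_add_smul (w := w)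
      (by rwa [add_assoc, ← two_mul]) (mem_closedBall_zero_iff.1 hx))
    simp only [secondDiff_comp_add_smul] at hsum
    exact hsum
  calc _ ≤ ∑' k : ℕ, ((2 : ℝ≥0∞) ^ k) ^ q * ∫⁻ x in closedBall 0 (R + ‖w‖), H k x ∂μ := by
        gcongr 2 with k
        exact setLIntegral_closedBall_le_lintegral_lintegral_add (hc k) (hcw k) (hg k)
    _ = ∫⁻ x in closedBall 0 (R + ‖w‖), ∑' k : ℕ, ((2 : ℝ≥0∞) ^ k) ^ q * H k x ∂μ := by
        rw [lintegral_tsum fun k ↦ ((hH k).const_mul _).aemeasurable]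
        simp only [lintegral_const_mul _ (hH _)]
    _ ≤ ∫⁻ _ in closedBall 0 (R + ‖w‖), ENNReal.ofReal m ^ q * ‖w‖ₑ ^ q ∂μ :=
        setLIntegral_mono' measurableSet_closedBall hmartingale
    _ = ENNReal.ofReal m ^ q * ‖w‖ₑ ^ q * μ (closedBall 0 (R + ‖w‖)) := setLIntegral_const _ _

end SecondDifferenceSum

section SmoothingKernel

open ContinuousLinearMap (lsmul)
open scoped Convolution NNReal Pointwise

variable {E : Type*} [NormedAddCommGroup E]

lemma exists_cutoff [NormedSpace ℝ E] {R δ : ℝ} (hR : 0 ≤ R) (hδ : 0 < δ) :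
    ∃ χ : E → ℝ, LipschitzWith δ.toNNReal⁻¹ χ ∧ (∀ x, χ x ∈ Icc 0 1) ∧ (∀ x, χ (-x) = χ x) ∧
      EqOn χ 1 (closedBall 0 R) ∧ Function.support χ ⊆ closedBall 0 (R + δ) := by
  refine ⟨fun x ↦ thickenedIndicator hδ (closedBall 0 R) x,
    fun x y ↦ lipschitzWith_thickenedIndicator hδ _ x y,
    fun x ↦ ⟨NNReal.coe_nonneg _, thickenedIndicator_le_one hδ _ x⟩, fun x ↦ ?_, fun x hx ↦ ?_,
    fun x ↦ ?_⟩
  · have hneg : -closedBall (0 : E) R = closedBall 0 R := by rw [neg_closedBall, neg_zero]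
    simp only [thickenedIndicator_apply, thickenedIndicatorAux]
    rw [← infEDist_neg_neg, neg_neg, hneg]
  · simp only [thickenedIndicator_one hδ _ hx, NNReal.coe_one, Pi.one_apply]
  · contrapose!
    intro hx
    simp only [Function.mem_support, not_not, NNReal.coe_eq_zero]
    refine thickenedIndicator_zero hδ _ fun hmem ↦ hx ?_
    rw [thickening_closedBall hδ hR, add_comm] at hmem
    exact ball_subset_closedBall hmem

variable [MeasurableSpace E]

/-- `ψ` is an even `C¹` probability density with respect to `μ`, supported in the ball of radius `r`
around the origin: the kernels by which Lipschitz maps are smoothed. -/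
structure IsSmoothingKernel [NormedSpace ℝ E] (μ : Measure E) (r : ℝ) (ψ : E → ℝ) : Prop where
  contDiff : ContDiff ℝ 1 ψ
  nonneg : ∀ x, 0 ≤ ψ x
  even : ∀ x, ψ (-x) = ψ x
  integral_eq_one : ∫ x, ψ x ∂μ = 1
  support_subset : Function.support ψ ⊆ closedBall 0 r

variable [NormedSpace ℝ E] [FiniteDimensional ℝ E] {μ : Measure E} {r : ℝ} {ψ : E → ℝ}

lemma IsSmoothingKernel.hasCompactSupport (hψ : IsSmoothingKernel μ r ψ) : HasCompactSupport ψ :=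
  .of_support_subset_isCompact (isCompact_closedBall 0 r) hψ.support_subset

lemma measureReal_closedBall_pos [μ.IsOpenPosMeasure] [IsFiniteMeasureOnCompacts μ]
    {R : ℝ} (hR : 0 < R) : 0 < μ.real (closedBall (0 : E) R) :=
  ENNReal.toReal_pos (measure_closedBall_pos μ 0 hR).ne' measure_closedBall_lt_top.ne

variable [BorelSpace E]

lemma isSmoothingKernel_normed [μ.IsOpenPosMeasure] [IsLocallyFiniteMeasure μ]
    (b : ContDiffBump (0 : E)) : IsSmoothingKernel μ b.rOut (b.normed μ) where
  contDiff := b.contDiff_normed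
  nonneg := b.nonneg_normed
  even := b.normed_neg
  integral_eq_one := b.integral_normed
  support_subset := b.support_normed_eq.trans_subset ball_subset_closedBall

namespace IsSmoothingKernel

lemma integrable [IsLocallyFiniteMeasure μ] (hψ : IsSmoothingKernel μ r ψ) : Integrable ψ μ :=
  hψ.contDiff.continuous.integrable_of_hasCompactSupport hψ.hasCompactSupport

variable {Y : Type*} [NormedAddCommGroup Y] [NormedSpace ℝ Y] {K : E → Y}

lemma integrable_smul_sub [IsLocallyFiniteMeasure μ] (hψ : IsSmoothingKernel μ r ψ)
    (hK : Continuous K) (x : E) :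
    Integrable (fun a ↦ ψ a • K (x - a)) μ :=
  (hψ.contDiff.continuous.smul (by fun_prop)).integrable_of_hasCompactSupport
    hψ.hasCompactSupport.smul_right

lemma norm_integral_smul_le [IsLocallyFiniteMeasure μ] (hψ : IsSmoothingKernel μ r ψ) {C : ℝ}
    {H : E → Y} (hH : ∀ a ∈ closedBall 0 r, ‖H a‖ ≤ C) :
    ‖∫ a, ψ a • H a ∂μ‖ ≤ C := by
  calc ‖∫ a, ψ a • H a ∂μ‖ ≤ ∫ a, ψ a * C ∂μ := by
        refine norm_integral_le_of_norm_le (hψ.integrable.mul_const C) (.of_forall fun a ↦ ?_)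
        rw [norm_smul, Real.norm_of_nonneg (hψ.nonneg a)]
        by_cases ha : ψ a = 0
        · simp only [ha, zero_mul, le_refl]
        · exact mul_le_mul_of_nonneg_left (hH a (hψ.support_subset ha)) (hψ.nonneg a)
    _ = C := by rw [integral_mul_const, hψ.integral_eq_one, one_mul]

lemma lipschitzOnWith_convolution [IsLocallyFiniteMeasure μ] (hψ : IsSmoothingKernel μ r ψ)
    (hK : Continuous K) {ℓ : ℝ≥0} {s t : Set E} (hKt : LipschitzOnWith ℓ K t)
    (hst : ∀ x ∈ s, ∀ a ∈ closedBall 0 r, x - a ∈ t) :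
    LipschitzOnWith ℓ (ψ ⋆[lsmul ℝ ℝ, μ] K) s := by
  refine .of_dist_le_mul fun x hx y hy ↦ ?_
  rw [dist_eq_norm, convolution_lsmul, convolution_lsmul,
    ← integral_sub (hψ.integrable_smul_sub hK x) (hψ.integrable_smul_sub hK y)]
  simp only [← smul_sub]
  refine hψ.norm_integral_smul_le fun a ha ↦ ?_
  rw [← dist_eq_norm, ← dist_sub_right x y a]
  exact hKt.dist_le_mul _ (hst x hx a ha) _ (hst y hy a ha)

variable [μ.IsAddHaarMeasure]

lemma inv_integral_mul_convolution (hψ : IsSmoothingKernel μ r ψ) {χ : E → ℝ} {R : ℝ}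
    (hχ : Continuous χ) (hχ_nonneg : ∀ x, 0 ≤ χ x) (hχ_even : ∀ x, χ (-x) = χ x)
    (hχ_support : Function.support χ ⊆ closedBall 0 R) (hχ_pos : 0 < ∫ x, χ x ∂μ) :
    IsSmoothingKernel μ (r + R) fun x ↦ (∫ x, χ x ∂μ)⁻¹ * (ψ ⋆[lsmul ℝ ℝ, μ] χ) x where
  contDiff := contDiff_const.mul <| hψ.hasCompactSupport.contDiff_convolution_left _ hψ.contDiff
    hχ.locallyIntegrable
  nonneg x := mul_nonneg (inv_nonneg.2 hχ_pos.le) <|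
    integral_nonneg fun a ↦ mul_nonneg (hψ.nonneg a) (hχ_nonneg _)
  even x := by
    have : μ.IsNegInvariant := Measure.IsAddHaarMeasure.isNegInvariant_of_regular μ
    rw [convolution_neg_of_neg_eq _ (.of_forall hψ.even) (.of_forall hχ_even)]
  integral_eq_one := by
    have hχ_int : Integrable χ μ := hχ.integrable_of_hasCompactSupport
      (.of_support_subset_isCompact (isCompact_closedBall 0 R) hχ_support)
    rw [integral_const_mul, integral_convolution _ hψ.integrable hχ_int, hψ.integral_eq_one,
      ContinuousLinearMap.lsmul_apply, one_smul, inv_mul_cancel₀ hχ_pos.ne']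
  support_subset x hx := by
    obtain ⟨a, ha, b, hb, rfl⟩ :=
      support_convolution_subset (lsmul ℝ ℝ) (right_ne_zero_of_mul hx)
    rw [mem_closedBall_zero_iff]
    exact norm_add_le_of_le (mem_closedBall_zero_iff.1 (hψ.support_subset ha))
      (mem_closedBall_zero_iff.1 (hχ_support hb))

end IsSmoothingKernel

variable [μ.IsAddHaarMeasure]

lemma exists_isSmoothingKernel (μ : Measure E) [μ.IsAddHaarMeasure] {R δ : ℝ} (hR : 0 < R)
    (hδ : 0 < δ) :
    ∃ ψ : E → ℝ, IsSmoothingKernel μ (R + 2 * δ) ψ ∧ (∀ x, ψ x ≤ (μ.real (closedBall 0 R))⁻¹) ∧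
      LipschitzWith ((μ.real (closedBall (0 : E) R))⁻¹ * δ⁻¹).toNNReal ψ := by
  obtain ⟨χ, hχ_lip, hχ_Icc, hχ_even, hχ_one, hχ_support⟩ := exists_cutoff (E := E) hR.le hδ
  have hV : 0 < μ.real (closedBall (0 : E) R) := measureReal_closedBall_pos hR
  have hχ_int : Integrable χ μ := hχ_lip.continuous.integrable_of_hasCompactSupport
    (.of_support_subset_isCompact (isCompact_closedBall 0 _) hχ_support)
  have hVχ : μ.real (closedBall 0 R) ≤ ∫ x, χ x ∂μ := by
    calc μ.real (closedBall 0 R) = ∫ x in closedBall 0 R, χ x ∂μ := by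
          rw [setIntegral_congr_fun measurableSet_closedBall hχ_one]
          simp only [Pi.one_apply, integral_const, smul_eq_mul, mul_one,
            measureReal_restrict_apply_univ]
      _ ≤ ∫ x, χ x ∂μ := setIntegral_le_integral hχ_int (.of_forall fun x ↦ (hχ_Icc x).1)
  have hinv : (∫ x, χ x ∂μ)⁻¹ ≤ (μ.real (closedBall (0 : E) R))⁻¹ := inv_anti₀ hV hVχ
  have hη : IsSmoothingKernel μ δ _ :=
    isSmoothingKernel_normed (⟨δ / 2, δ, half_pos hδ, half_lt_self hδ⟩ : ContDiffBump (0 : E))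
  have hψ := hη.inv_integral_mul_convolution hχ_lip.continuous (fun x ↦ (hχ_Icc x).1) hχ_even
    hχ_support (hV.trans_le hVχ)
  rw [show δ + (R + δ) = R + 2 * δ by ring] at hψ
  refine ⟨_, hψ, fun x ↦ ?_, .of_dist_le_mul fun x y ↦ ?_⟩
  · have hle_one := (le_abs_self _).trans <| hη.norm_integral_smul_le (C := 1)
      (H := fun a ↦ χ (x - a)) fun a _ ↦ abs_le.2
        ⟨by linarith [(hχ_Icc (x - a)).1], (hχ_Icc (x - a)).2⟩
    exact (mul_le_mul hinv hle_one (integral_nonneg fun a ↦ mul_nonneg (hη.nonneg a)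
      (hχ_Icc _).1) (by positivity)).trans_eq (mul_one _)
  · have hlip := lipschitzOnWith_univ.1 <| hη.lipschitzOnWith_convolution hχ_lip.continuous
      hχ_lip.lipschitzOnWith fun _ _ _ _ ↦ mem_univ _
    rw [Real.dist_eq, ← mul_sub, abs_mul, ← Real.dist_eq, abs_of_pos (inv_pos.2 (hV.trans_le hVχ)),
      Real.coe_toNNReal _ (by positivity), mul_assoc]
    refine mul_le_mul hinv ((hlip.dist_le_mul x y).trans_eq ?_) dist_nonneg (by positivity)
    rw [NNReal.coe_inv, Real.coe_toNNReal _ hδ.le]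

lemma measureReal_closedBall_one_le_two_mul [Nontrivial E] :
    μ.real (closedBall 0 1) ≤ 2 * μ.real (closedBall 0 (1 - 1 / (2 * finrank ℝ E))) := by
  have hn : (1 : ℝ) ≤ finrank ℝ E := by exact_mod_cast Module.finrank_pos (R := ℝ) (M := E)
  have hle : 1 / (2 * finrank ℝ E : ℝ) ≤ 1 / 2 := one_div_le_one_div_of_le two_pos (by linarith)
  have bernoulli : (1 : ℝ) / 2 ≤ (1 - 1 / (2 * finrank ℝ E)) ^ finrank ℝ E := by
    refine le_trans (le_of_eq ?_) (one_add_mul_sub_le_pow (by linarith) (finrank ℝ E))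
    field_simp
    ring
  rw [Measure.addHaar_real_closedBall' μ 0 (sub_nonneg.2 (hle.trans (by norm_num))), ← mul_assoc]
  exact le_mul_of_one_le_left measureReal_nonneg (by linarith)

lemma exists_isSmoothingKernel_one (μ : Measure E) [μ.IsAddHaarMeasure] [Nontrivial E] :
    ∃ ψ : E → ℝ, IsSmoothingKernel μ 1 ψ ∧ (∀ x, ψ x ≤ 2 / μ.real (closedBall 0 1)) ∧
      LipschitzWith (8 * finrank ℝ E / μ.real (closedBall (0 : E) 1)).toNNReal ψ := by
  have hn : (1 : ℝ) ≤ finrank ℝ E := by exact_mod_cast Module.finrank_pos (R := ℝ) (M := E)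
  have hle : 1 / (2 * finrank ℝ E : ℝ) ≤ 1 / 2 := one_div_le_one_div_of_le two_pos (by linarith)
  obtain ⟨ψ, hψ, hle_inv, hlip⟩ := exists_isSmoothingKernel μ
    (R := 1 - 1 / (2 * finrank ℝ E)) (δ := 1 / (4 * finrank ℝ E)) (by linarith) (by positivity)
  have hV : 0 < μ.real (closedBall (0 : E) 1) := measureReal_closedBall_pos one_pos
  have hinv : (μ.real (closedBall (0 : E) (1 - 1 / (2 * finrank ℝ E))))⁻¹
      ≤ 2 / μ.real (closedBall (0 : E) 1) := by
    refine (inv_anti₀ (half_pos hV) ?_).trans_eq (inv_div _ _)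
    linarith [measureReal_closedBall_one_le_two_mul (μ := μ)]
  rw [show 1 - 1 / (2 * finrank ℝ E : ℝ) + 2 * (1 / (4 * finrank ℝ E)) = 1 by field_simp; ring]
    at hψ
  refine ⟨ψ, hψ, fun x ↦ (hle_inv x).trans hinv, hlip.weaken (Real.toNNReal_mono ?_)⟩
  calc _ ≤ 2 / μ.real (closedBall (0 : E) 1) * (1 / (4 * finrank ℝ E : ℝ))⁻¹ := by gcongr
    _ = 8 * finrank ℝ E / μ.real (closedBall (0 : E) 1) := by field_simp; norm_num

end SmoothingKernel

section DoubleConvolution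

open ContinuousLinearMap (lsmul)
open ProbabilityTheory (cond)
open scoped Convolution

variable {E : Type*} [NormedAddCommGroup E] [MeasurableSpace E] {μ : Measure E}

/-- The law of the sum of two independent points of the unit ball, distributed according to the
normalization of `μ`. -/
def ballSumMeasure (μ : Measure E) : Measure E := cond μ (closedBall 0 1) ∗ cond μ (closedBall 0 1)

/-- The average size of the second differences of `G` at `z` over the increments `a + b`, where `a`
and `b` are independent uniform points of the unit ball. -/
def meanSecondDiff {Y : Type*} [NormedAddCommGroup Y] [Module ℝ Y] (μ : Measure E) (G : E → Y)
    (z : E) : ℝ≥0∞ := ∫⁻ v, ‖secondDiff G v z‖ₑ ∂ballSumMeasure μ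

/-- `θ` is a continuous function supported in the unit ball, where it is at most `A` times the
density of the uniform distribution. -/
structure IsUnitBallKernel (μ : Measure E) (A : ℝ) (θ : E → ℝ) : Prop where
  continuous : Continuous θ
  support_subset : Function.support θ ⊆ closedBall 0 1
  abs_le : ∀ a, |θ a| ≤ A / μ.real (closedBall 0 1)

variable [NormedSpace ℝ E] [FiniteDimensional ℝ E]

lemma IsUnitBallKernel.hasCompactSupport {A : ℝ} {θ : E → ℝ} (hθ : IsUnitBallKernel μ A θ) :
    HasCompactSupport θ :=
  .of_support_subset_isCompact (isCompact_closedBall 0 1) hθ.support_subset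

variable [BorelSpace E]

section Convolution

variable [IsLocallyFiniteMeasure μ] {Y : Type*} [NormedAddCommGroup Y] [NormedSpace ℝ Y]
  {θ φ : E → ℝ}

lemma integrable_mul_smul (hθ : Continuous θ) (hθc : HasCompactSupport θ) (hφ : Continuous φ)
    (hφc : HasCompactSupport φ) {H : E × E → Y} (hH : Continuous H) :
    Integrable (fun p : E × E ↦ (θ p.1 * φ p.2) • H p) (μ.prod μ) := by
  refine Continuous.integrable_of_hasCompactSupport (by fun_prop) <|
    HasCompactSupport.intro (hθc.prod hφc) fun p hp ↦ ?_
  rcases not_and_or.1 (mem_prod.not.1 hp) with hp | hp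
  · rw [image_eq_zero_of_notMem_tsupport hp, zero_mul, zero_smul]
  · rw [image_eq_zero_of_notMem_tsupport hp, mul_zero, zero_smul]

variable {K : E → Y}

lemma convolution_convolution_eq_integral (hθ : Continuous θ) (hθc : HasCompactSupport θ)
    (hφ : Continuous φ) (hφc : HasCompactSupport φ) (hK : Continuous K) (z : E) :
    (θ ⋆[lsmul ℝ ℝ, μ] (φ ⋆[lsmul ℝ ℝ, μ] K)) z =
      ∫ p : E × E, (θ p.1 * φ p.2) • K (z - p.1 - p.2) ∂μ.prod μ := by
  rw [integral_prod _ (integrable_mul_smul hθ hθc hφ hφc (by fun_prop))]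
  simp only [convolution_lsmul, mul_smul, integral_smul]

lemma convolution_left_comm (hθ : Continuous θ) (hθc : HasCompactSupport θ) (hφ : Continuous φ)
    (hφc : HasCompactSupport φ) (hK : Continuous K) :
    θ ⋆[lsmul ℝ ℝ, μ] (φ ⋆[lsmul ℝ ℝ, μ] K) = φ ⋆[lsmul ℝ ℝ, μ] (θ ⋆[lsmul ℝ ℝ, μ] K) := by
  ext z
  rw [convolution_convolution_eq_integral hθ hθc hφ hφc hK,
    convolution_convolution_eq_integral hφ hφc hθ hθc hK, ← integral_prod_swap]
  simp only [Prod.fst_swap, Prod.snd_swap, mul_comm (θ _), sub_right_comm z]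

end Convolution

variable [μ.IsAddHaarMeasure] {Y : Type*} [NormedAddCommGroup Y] [NormedSpace ℝ Y]

lemma integral_smul_secondDiff [CompleteSpace Y] {θ : E → ℝ} (hθ : Continuous θ)
    (hθc : HasCompactSupport θ) (hθ_parity : θ.Even ∨ θ.Odd) {K : E → Y} (hK : Continuous K)
    (z : E) :
    ∫ p : E × E, (θ p.1 * θ p.2) • secondDiff K (p.1 + p.2) z ∂μ.prod μ =
      (2 : ℝ) • ((θ ⋆[lsmul ℝ ℝ, μ] (θ ⋆[lsmul ℝ ℝ, μ] K)) z - (∫ a, θ a ∂μ) ^ 2 • K z) := by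
  have hint {H : E × E → Y} (hH : Continuous H) := integrable_mul_smul (μ := μ) hθ hθc hθ hθc hH
  have hsub : ∫ p : E × E, (θ p.1 * θ p.2) • K (z - (p.1 + p.2)) ∂μ.prod μ =
      (θ ⋆[lsmul ℝ ℝ, μ] (θ ⋆[lsmul ℝ ℝ, μ] K)) z := by
    rw [convolution_convolution_eq_integral hθ hθc hθ hθc hK]
    simp only [sub_sub]
  have hadd : ∫ p : E × E, (θ p.1 * θ p.2) • K (z + (p.1 + p.2)) ∂μ.prod μ =
      (θ ⋆[lsmul ℝ ℝ, μ] (θ ⋆[lsmul ℝ ℝ, μ] K)) z := by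
    have hneg (p : E × E) : θ (-p.1) * θ (-p.2) = θ p.1 * θ p.2 := by
      rcases hθ_parity with h | h
      · rw [h, h]
      · rw [h, h, neg_mul_neg]
    have := Measure.IsAddHaarMeasure.isNegInvariant_of_regular (μ.prod μ)
    rw [← hsub, ← integral_neg_eq_self]
    simp only [Prod.fst_neg, Prod.snd_neg, hneg, ← neg_add, sub_eq_add_neg]
  have hconst : ∫ p : E × E, (θ p.1 * θ p.2) • (2 : ℝ) • K z ∂μ.prod μ =
      (∫ a, θ a ∂μ) ^ 2 • (2 : ℝ) • K z := by
    rw [integral_smul_const, integral_prod_mul, sq]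
  simp only [secondDiff, smul_sub, smul_add]
  rw [integral_sub (by exact (hint (by fun_prop)).add (hint (by fun_prop))) (hint (by fun_prop)),
    integral_add (hint (by fun_prop)) (hint (by fun_prop)), hadd, hsub, hconst, smul_comm,
    ← two_smul ℝ]

namespace IsUnitBallKernel

variable {A : ℝ} {θ : E → ℝ}

lemma lintegral_enorm_mul_le (hθ : IsUnitBallKernel μ A θ) (g : E → ℝ≥0∞) :
    ∫⁻ a, ‖θ a‖ₑ * g a ∂μ ≤ ENNReal.ofReal A * ∫⁻ a, g a ∂cond μ (closedBall 0 1) := by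
  have hμ : μ (closedBall (0 : E) 1) ≠ 0 := (measure_closedBall_pos μ 0 one_pos).ne'
  rw [ProbabilityTheory.cond, lintegral_smul_measure, smul_eq_mul, ← mul_assoc,
    ← lintegral_const_mul' _ _ (mul_ne_top ofReal_ne_top (inv_ne_top.2 hμ)),
    ← lintegral_indicator measurableSet_closedBall]
  refine lintegral_mono fun a ↦ ?_
  by_cases ha : a ∈ closedBall 0 1
  · rw [indicator_of_mem ha]
    refine mul_le_mul_left ((Real.enorm_eq_ofReal_abs _).trans_le ?_) _
    rw [← div_eq_mul_inv, ← ofReal_measureReal (measure_closedBall_lt_top (μ := μ)).ne,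
      ← ofReal_div_of_pos (measureReal_closedBall_pos one_pos)]
    exact ofReal_le_ofReal (hθ.abs_le a)
  · rw [indicator_of_notMem ha, Function.notMem_support.1 (notMem_subset hθ.support_subset ha),
      enorm_zero, zero_mul]

lemma enorm_integral_mul_smul_le (hθ : IsUnitBallKernel μ A θ) {H : E → Y} (hH : Continuous H) :
    ‖∫ p : E × E, (θ p.1 * θ p.2) • H (p.1 + p.2) ∂μ.prod μ‖ₑ
      ≤ ENNReal.ofReal (A ^ 2) * ∫⁻ v, ‖H v‖ₑ ∂ballSumMeasure μ := by
  have hmeas : Continuous fun p : E × E ↦ (θ p.1 * θ p.2) • H (p.1 + p.2) := by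
    have := hθ.continuous
    fun_prop
  have hA : 0 ≤ A := by
    by_contra! hA
    exact (div_neg_of_neg_of_pos hA (measureReal_closedBall_pos one_pos)).not_ge
      ((abs_nonneg _).trans (hθ.abs_le 0))
  calc _ ≤ ∫⁻ p : E × E, ‖(θ p.1 * θ p.2) • H (p.1 + p.2)‖ₑ ∂μ.prod μ :=
        enorm_integral_le_lintegral_enorm _
    _ = ∫⁻ a, ‖θ a‖ₑ * ∫⁻ b, ‖θ b‖ₑ * ‖H (a + b)‖ₑ ∂μ ∂μ := by
        rw [lintegral_prod _ hmeas.enorm.aemeasurable]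
        simp only [enorm_smul, enorm_mul, mul_assoc, lintegral_const_mul' _ _ enorm_ne_top]
    _ ≤ ∫⁻ a, ‖θ a‖ₑ * (ENNReal.ofReal A * ∫⁻ b, ‖H (a + b)‖ₑ ∂cond μ (closedBall 0 1)) ∂μ := by
        gcongr
        exact hθ.lintegral_enorm_mul_le _
    _ ≤ ENNReal.ofReal A * ∫⁻ a, ENNReal.ofReal A * ∫⁻ b, ‖H (a + b)‖ₑ ∂cond μ (closedBall 0 1)
          ∂cond μ (closedBall 0 1) := hθ.lintegral_enorm_mul_le _
    _ = _ := by
        rw [lintegral_const_mul' _ _ ofReal_ne_top, ← mul_assoc, ← ofReal_mul hA, ← sq,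
          ballSumMeasure, Measure.lintegral_conv hH.enorm.measurable]

lemma enorm_convolution_convolution_sub_le [CompleteSpace Y] (hθ : IsUnitBallKernel μ A θ)
    (hθ_parity : θ.Even ∨ θ.Odd) {K : E → Y} (hK : Continuous K) (z : E) :
    ‖(θ ⋆[lsmul ℝ ℝ, μ] (θ ⋆[lsmul ℝ ℝ, μ] K)) z - (∫ a, θ a ∂μ) ^ 2 • K z‖ₑ
      ≤ ENNReal.ofReal (A ^ 2 / 2) * meanSecondDiff μ K z := by
  have hcont : Continuous fun v ↦ secondDiff K v z :=
    continuous_secondDiff hK continuous_id continuous_const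
  have hle := hθ.enorm_integral_mul_smul_le hcont
  rw [integral_smul_secondDiff hθ.continuous hθ.hasCompactSupport hθ_parity hK, enorm_smul] at hle
  rw [← ENNReal.mul_le_mul_iff_right two_ne_zero ofNat_ne_top, ← mul_assoc,
    ← ofReal_ofNat 2, ← ofReal_mul two_pos.le, mul_div_cancel₀ _ two_ne_zero]
  rwa [Real.enorm_of_nonneg two_pos.le] at hle

end IsUnitBallKernel
end DoubleConvolution

section TaylorApproximation

open ContinuousLinearMap (lsmul)
open scoped Convolution NNReal

/-- The probability measure on `[0, 1]` against which the error of a first order Taylor expansion is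
averaged: the error splits into a term at the end point `1` and an integral remainder. -/
def taylorMeasure : Measure ℝ := (2 : ℝ≥0∞)⁻¹ • (Measure.dirac 1 + volume.restrict (Ioc 0 1))

instance : IsProbabilityMeasure taylorMeasure :=
  ⟨by simp [taylorMeasure, ENNReal.inv_two_add_inv_two]⟩

lemma ae_taylorMeasure_mem_Icc : ∀ᵐ τ ∂taylorMeasure, τ ∈ Icc (0 : ℝ) 1 := by
  refine Measure.ae_smul_measure (ae_add_measure_iff.2 ⟨?_, ?_⟩) _
  · simp [ae_dirac_eq]
  · filter_upwards [ae_restrict_mem measurableSet_Ioc] with τ hτ using Ioc_subset_Icc_self hτ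

lemma two_mul_lintegral_taylorMeasure (g : ℝ → ℝ≥0∞) :
    2 * ∫⁻ τ, g τ ∂taylorMeasure = g 1 + ∫⁻ τ in Ioc 0 1, g τ := by
  rw [taylorMeasure, lintegral_smul_measure, lintegral_add_measure, lintegral_dirac, smul_eq_mul,
    ← mul_assoc, ENNReal.mul_inv_cancel two_ne_zero ofNat_ne_top, one_mul]

lemma enorm_sub_sub_le_lintegral {Y : Type*} [NormedAddCommGroup Y] [NormedSpace ℝ Y]
    [CompleteSpace Y] {h h' h'' : ℝ → Y} (hh : ∀ τ, HasDerivAt h (h' τ) τ)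
    (hh' : ∀ τ, HasDerivAt h' (h'' τ) τ) (hh'' : Continuous h'') :
    ‖h 1 - h 0 - h' 0‖ₑ ≤ ∫⁻ τ in Ioc 0 1, ‖h'' τ‖ₑ := by
  have hderiv (τ : ℝ) : HasDerivAt (fun τ ↦ (1 - τ) • h' τ + h τ) ((1 - τ) • h'' τ) τ := by
    convert (((hasDerivAt_id τ).const_sub 1).smul (hh' τ)).add (hh τ) using 1
    · ext; simp
    · simp
  have hftc : ∫ τ in (0 : ℝ)..1, (1 - τ) • h'' τ = h 1 - h 0 - h' 0 := by
    rw [intervalIntegral.integral_eq_sub_of_hasDerivAt (fun τ _ ↦ hderiv τ)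
      (Continuous.intervalIntegrable (by fun_prop) 0 1)]
    simp only [sub_self, zero_smul, zero_add, sub_zero, one_smul]
    abel
  rw [← hftc, intervalIntegral.integral_of_le zero_le_one]
  refine (enorm_integral_le_lintegral_enorm _).trans <|
    setLIntegral_mono' measurableSet_Ioc fun τ hτ ↦ ?_
  rw [enorm_smul]
  refine mul_le_of_le_one_left' ?_
  rw [Real.enorm_of_nonneg (sub_nonneg.2 hτ.2), ofReal_le_one]
  linarith [hτ.1]

variable {E : Type*} [NormedAddCommGroup E] [NormedSpace ℝ E] {ψ : E → ℝ}

lemma odd_fderiv_apply (hψ : ψ.Even) (u : E) : Function.Odd fun a ↦ fderiv ℝ ψ a u := by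
  intro a
  have hcomp := (ContinuousLinearEquiv.neg ℝ (M := E)).comp_right_fderiv (f := ψ) (x := a)
  rw [show ψ ∘ ContinuousLinearEquiv.neg ℝ = ψ from funext hψ] at hcomp
  simp [hcomp]

variable [MeasurableSpace E] {μ : Measure E}

lemma IsSmoothingKernel.isUnitBallKernel_fderiv (hψ : IsSmoothingKernel μ 1 ψ) {C : ℝ≥0}
    (hC : LipschitzWith C ψ) {A : ℝ} {u : E} (hu : C * ‖u‖ ≤ A / μ.real (closedBall 0 1)) :
    IsUnitBallKernel μ A fun a ↦ fderiv ℝ ψ a u where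
  continuous := (hψ.contDiff.continuous_fderiv one_ne_zero).clm_apply continuous_const
  support_subset a ha := closure_minimal hψ.support_subset isClosed_closedBall <|
    support_fderiv_subset ℝ fun h ↦ ha <| by simp [h]
  abs_le a := ((fderiv ℝ ψ a).le_of_opNorm_le (norm_fderiv_le_of_lipschitz ℝ hC) u).trans hu

variable [BorelSpace E] [FiniteDimensional ℝ E] [μ.IsAddHaarMeasure] {Y : Type*}
  [NormedAddCommGroup Y] [NormedSpace ℝ Y] {G K : E → Y}

lemma fderiv_convolution_apply (hψ : ContDiff ℝ 1 ψ) (hψc : HasCompactSupport ψ)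
    (hK : Continuous K) (z u : E) :
    fderiv ℝ (ψ ⋆[lsmul ℝ ℝ, μ] K) z u =
      ((fun a ↦ fderiv ℝ ψ a u) ⋆[lsmul ℝ ℝ, μ] K) z := by
  have hneg : μ.IsNegInvariant := Measure.IsAddHaarMeasure.isNegInvariant_of_regular μ
  have hexists : ConvolutionExistsAt (fderiv ℝ ψ) K z ((lsmul ℝ ℝ).precompL E) μ :=
    (hψc.fderiv ℝ).convolutionExists_left _ (hψ.continuous_fderiv one_ne_zero)
      hK.locallyIntegrable z
  rw [(hψc.hasFDerivAt_convolution_left _ hψ hK.locallyIntegrable z).fderiv, convolution,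
    ContinuousLinearMap.integral_apply hexists]
  rfl

lemma hasDerivAt_convolution_add_smul (hψ : ContDiff ℝ 1 ψ) (hψc : HasCompactSupport ψ)
    (hK : Continuous K) (x u : E) (τ : ℝ) :
    HasDerivAt (fun τ ↦ (ψ ⋆[lsmul ℝ ℝ, μ] K) (x + τ • u))
      (((fun a ↦ fderiv ℝ ψ a u) ⋆[lsmul ℝ ℝ, μ] K) (x + τ • u)) τ := by
  have hdiff : Differentiable ℝ (ψ ⋆[lsmul ℝ ℝ, μ] K) :=
    (hψc.contDiff_convolution_left _ hψ hK.locallyIntegrable).differentiable one_ne_zero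
  have hline : HasDerivAt (fun τ ↦ x + τ • u) u τ := by
    simpa using ((hasDerivAt_id τ).smul_const u).const_add x
  rw [← fderiv_convolution_apply hψ hψc hK]
  exact (hdiff _).hasFDerivAt.comp_hasDerivAt τ hline

lemma IsSmoothingKernel.norm_fderiv_convolution_convolution_le (hψ : IsSmoothingKernel μ 1 ψ)
    (hG : Continuous G) {x : E} {ℓ : ℝ≥0} (hℓ : LipschitzOnWith ℓ G (closedBall x 3)) :
    ‖fderiv ℝ (ψ ⋆[lsmul ℝ ℝ, μ] (ψ ⋆[lsmul ℝ ℝ, μ] G)) x‖ ≤ ℓ := by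
  have hψG : Continuous (ψ ⋆[lsmul ℝ ℝ, μ] G) :=
    hψ.hasCompactSupport.continuous_convolution_left _ hψ.contDiff.continuous hG.locallyIntegrable
  have hsub {R R' : ℝ} (hR : R + 1 ≤ R') : ∀ y ∈ closedBall x R, ∀ a ∈ closedBall (0 : E) 1,
      y - a ∈ closedBall x R' := fun y hy a ha ↦ by
    rw [mem_closedBall_iff_norm] at hy ⊢
    rw [mem_closedBall_zero_iff] at ha
    rw [sub_right_comm]
    linarith [norm_sub_le (y - x) a]
  have hψG_lip : LipschitzOnWith ℓ (ψ ⋆[lsmul ℝ ℝ, μ] G) (closedBall x 2) :=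
    hψ.lipschitzOnWith_convolution hG hℓ (hsub (by norm_num))
  have hP_lip := hψ.lipschitzOnWith_convolution hψG hψG_lip (s := closedBall x 1)
    (hsub (by norm_num))
  exact norm_fderiv_le_of_lipschitzOn ℝ (closedBall_mem_nhds x one_pos) hP_lip

variable [CompleteSpace Y]

lemma IsSmoothingKernel.enorm_taylor_remainder_le (hψ : IsSmoothingKernel μ 1 ψ) {A : ℝ} {u : E}
    (hu : IsUnitBallKernel μ A fun a ↦ fderiv ℝ ψ a u) (hG : Continuous G) (x : E) :
    letI P := ψ ⋆[lsmul ℝ ℝ, μ] (ψ ⋆[lsmul ℝ ℝ, μ] G)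
    ‖P (x + u) - P x - fderiv ℝ P x u‖ₑ ≤
      ENNReal.ofReal (A ^ 2 / 2) * ∫⁻ τ in Ioc (0 : ℝ) 1, meanSecondDiff μ G (x + τ • u) := by
  set θ : E → ℝ := fun a ↦ fderiv ℝ ψ a u
  have hneg : μ.IsNegInvariant := Measure.IsAddHaarMeasure.isNegInvariant_of_regular μ
  have hψc := hψ.hasCompactSupport
  have hodd : θ.Odd := odd_fderiv_apply hψ.even u
  have hθ_int : ∫ a, θ a ∂μ = 0 := by
    rw [← self_eq_neg, ← integral_neg, ← integral_neg_eq_self]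
    simp only [hodd _]
  have hcont {φ : E → ℝ} {K : E → Y} (hφ : Continuous φ) (hφc : HasCompactSupport φ)
      (hK : Continuous K) : Continuous (φ ⋆[lsmul ℝ ℝ, μ] K) :=
    hφc.continuous_convolution_left _ hφ hK.locallyIntegrable
  have hψG := hcont hψ.contDiff.continuous hψc hG
  have hθG := hcont hu.continuous hu.hasCompactSupport hG
  have hcomm := convolution_left_comm (μ := μ) hu.continuous hu.hasCompactSupport
    hψ.contDiff.continuous hψc hG
  have htaylor := enorm_sub_sub_le_lintegral
    (fun τ ↦ hasDerivAt_convolution_add_smul (μ := μ) hψ.contDiff hψc hψG x u τ)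
    (fun τ ↦ by
      rw [hcomm]
      exact hasDerivAt_convolution_add_smul (μ := μ) hψ.contDiff hψc hθG x u τ)
    ((hcont hu.continuous hu.hasCompactSupport hθG).comp (by fun_prop))
  rw [one_smul, zero_smul, add_zero, ← fderiv_convolution_apply hψ.contDiff hψc hψG] at htaylor
  refine htaylor.trans ?_
  rw [← lintegral_const_mul' _ _ ofReal_ne_top]
  gcongr with τ
  simpa [hθ_int] using hu.enorm_convolution_convolution_sub_le (.inr hodd) hG (x + τ • u)

lemma IsSmoothingKernel.enorm_sub_taylor_le (hψ : IsSmoothingKernel μ 1 ψ)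
    (hψ_le : ∀ a, ψ a ≤ 2 / μ.real (closedBall 0 1)) {u : E}
    (hu : IsUnitBallKernel μ 8 fun a ↦ fderiv ℝ ψ a u) (hG : Continuous G) (x : E) :
    letI P := ψ ⋆[lsmul ℝ ℝ, μ] (ψ ⋆[lsmul ℝ ℝ, μ] G)
    ‖G (x + u) - (P x + fderiv ℝ P x u)‖ₑ
      ≤ 64 * ∫⁻ τ, meanSecondDiff μ G (x + τ • u) ∂taylorMeasure := by
  set P : E → Y := ψ ⋆[lsmul ℝ ℝ, μ] (ψ ⋆[lsmul ℝ ℝ, μ] G)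
  have hψ_unit : IsUnitBallKernel μ 2 ψ :=
    ⟨hψ.contDiff.continuous, hψ.support_subset, fun a ↦ by
      simpa only [abs_of_nonneg (hψ.nonneg a)] using hψ_le a⟩
  have hsmooth : ‖P (x + u) - G (x + u)‖ₑ ≤ 32 * meanSecondDiff μ G (x + u) := by
    have hle := hψ_unit.enorm_convolution_convolution_sub_le (.inl hψ.even) hG (x + u)
    rw [hψ.integral_eq_one, one_pow, one_smul] at hle
    exact hle.trans (by gcongr; norm_num)
  have htaylor : ‖P (x + u) - P x - fderiv ℝ P x u‖ₑ ≤
      32 * ∫⁻ τ in Ioc (0 : ℝ) 1, meanSecondDiff μ G (x + τ • u) := by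
    refine (hψ.enorm_taylor_remainder_le hu hG x).trans ?_
    gcongr
    norm_num
  calc ‖G (x + u) - (P x + fderiv ℝ P x u)‖ₑ
      = ‖(P (x + u) - P x - fderiv ℝ P x u) - (P (x + u) - G (x + u))‖ₑ := by congr 1; abel
    _ ≤ 32 * (∫⁻ τ in Ioc (0 : ℝ) 1, meanSecondDiff μ G (x + τ • u))
          + 32 * meanSecondDiff μ G (x + u) := enorm_sub_le.trans (add_le_add htaylor hsmooth)
    _ = 64 * ∫⁻ τ, meanSecondDiff μ G (x + τ • u) ∂taylorMeasure := by
        rw [show (64 : ℝ≥0∞) = 32 * 2 by norm_num, mul_assoc, two_mul_lintegral_taylorMeasure,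
          mul_add, one_smul, add_comm]

lemma exists_affineMap_lipschitzWith_enorm_sub_le (μ : Measure E) [μ.IsAddHaarMeasure]
    [Nontrivial E] (hG : Continuous G) (x : E) {ℓ : ℝ≥0}
    (hℓ : LipschitzOnWith ℓ G (closedBall x 3)) :
    ∃ Λ : E →ᵃ[ℝ] Y, LipschitzWith ℓ Λ ∧ ∀ u, ‖u‖ ≤ 1 / finrank ℝ E →
      ‖G (x + u) - Λ (x + u)‖ₑ
        ≤ 64 * ∫⁻ τ, meanSecondDiff μ G (x + τ • u) ∂taylorMeasure := by
  obtain ⟨ψ, hψ, hψ_le, hψ_lip⟩ := exists_isSmoothingKernel_one μ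
  set P : E → Y := ψ ⋆[lsmul ℝ ℝ, μ] (ψ ⋆[lsmul ℝ ℝ, μ] G)
  set D : E →L[ℝ] Y := fderiv ℝ P x
  refine ⟨(D : E →ₗ[ℝ] Y).toAffineMap + AffineMap.const ℝ E (P x - D x), ?_, fun u hu ↦ ?_⟩
  · have hD : LipschitzWith ℓ D :=
      D.lipschitz.weaken (hψ.norm_fderiv_convolution_convolution_le hG hℓ)
    have hadd := hD.add (LipschitzWith.const (P x - D x))
    rwa [add_zero] at hadd
  · have hn : (0 : ℝ) < finrank ℝ E := by exact_mod_cast Module.finrank_pos (R := ℝ) (M := E)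
    have hθ : IsUnitBallKernel μ 8 fun a ↦ fderiv ℝ ψ a u := by
      refine hψ.isUnitBallKernel_fderiv hψ_lip ?_
      rw [Real.coe_toNNReal _ (by positivity)]
      calc 8 * finrank ℝ E / μ.real (closedBall (0 : E) 1) * ‖u‖
          ≤ 8 * finrank ℝ E / μ.real (closedBall (0 : E) 1) * (1 / finrank ℝ E) := by gcongr
        _ = 8 / μ.real (closedBall (0 : E) 1) := by field_simp
    convert hψ.enorm_sub_taylor_le hψ_le hθ hG x using 3
    simp [P, D]
    abel

end TaylorApproximation

section SingleScale

open ProbabilityTheory (cond)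

lemma rpow_lintegral_le_lintegral_rpow {α : Type*} [MeasurableSpace α] {P : Measure α}
    [IsProbabilityMeasure P] {q : ℝ} (hq : 1 ≤ q) {g : α → ℝ≥0∞} (hg : AEMeasurable g P) :
    (∫⁻ a, g a ∂P) ^ q ≤ ∫⁻ a, g a ^ q ∂P := by
  have hle := eLpNorm'_le_eLpNorm'_of_exponent_le one_pos hq P hg.aestronglyMeasurable
  simp only [eLpNorm', enorm_eq_self, rpow_one, div_one] at hle
  rwa [← ENNReal.le_rpow_inv_iff (one_pos.trans_le hq), ← one_div]

variable {E : Type*} [NormedAddCommGroup E] [MeasurableSpace E]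

lemma isProbabilityMeasure_cond_closedBall [ProperSpace E] (μ : Measure E) [μ.IsOpenPosMeasure]
    [IsFiniteMeasureOnCompacts μ] {ρ : ℝ} (hρ : 0 < ρ) :
    IsProbabilityMeasure (cond μ (closedBall 0 ρ)) :=
  ProbabilityTheory.cond_isProbabilityMeasure_of_finite (measure_closedBall_pos μ 0 hρ).ne'
    measure_closedBall_lt_top.ne

section Borel

variable [BorelSpace E]

instance [ProperSpace E] (μ : Measure E) [μ.IsOpenPosMeasure] [IsFiniteMeasureOnCompacts μ] :
    IsProbabilityMeasure (ballSumMeasure μ) := by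
  have := isProbabilityMeasure_cond_closedBall μ one_pos
  unfold ballSumMeasure
  infer_instance

lemma ae_ballSumMeasure_norm_le [ProperSpace E] (μ : Measure E) [μ.IsOpenPosMeasure]
    [IsFiniteMeasureOnCompacts μ] : ∀ᵐ v ∂ballSumMeasure μ, ‖v‖ ≤ 2 := by
  have := isProbabilityMeasure_cond_closedBall μ one_pos
  have hball : ∀ᵐ a ∂cond μ (closedBall 0 1), ‖a‖ ≤ 1 := by
    filter_upwards [ProbabilityTheory.ae_cond_mem measurableSet_closedBall] with a ha
    exact mem_closedBall_zero_iff.1 ha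
  rw [ballSumMeasure, Measure.conv, ae_map_iff (by fun_prop)
    (measurableSet_le measurable_norm measurable_const)]
  filter_upwards [Measure.quasiMeasurePreserving_fst.ae hball,
    Measure.quasiMeasurePreserving_snd.ae hball] with p h₁ h₂
  exact (norm_add_le_of_le h₁ h₂).trans_eq one_add_one_eq_two

lemma setLAverage_closedBall_eq_lintegral_cond {μ : Measure E}
    [μ.IsAddLeftInvariant] (x : E) (ρ : ℝ) (g : E → ℝ≥0∞) :
    ⨍⁻ y in closedBall x ρ, g y ∂μ = ∫⁻ u, g (x + u) ∂cond μ (closedBall 0 ρ) := by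
  have hpre : (x + ·) ⁻¹' closedBall x ρ = closedBall 0 ρ := by
    ext u
    simp [dist_eq_norm]
  rw [setLAverage_eq, ← (measurePreserving_add_left μ x).setLIntegral_comp_preimage_emb
    (MeasurableEquiv.addLeft x).measurableEmbedding, ← measure_preimage_add μ x, hpre,
    ProbabilityTheory.cond, lintegral_smul_measure, smul_eq_mul, ENNReal.div_eq_inv_mul]

end Borel

variable {μ : Measure E} {Y : Type*} [NormedAddCommGroup Y] [NormedSpace ℝ Y]
  {q R ρ : ℝ} {F : E → Y}

/-- The `q`-th power of the `L_q` norm on `closedBall 0 R` of the second difference of `F` with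
increment `v`. -/
def secondDiffIntegral (μ : Measure E) (q R : ℝ) (F : E → Y) (v : E) : ℝ≥0∞ :=
  ∫⁻ z in closedBall 0 R, ‖secondDiff F v z‖ₑ ^ q ∂μ

lemma secondDiffIntegral_mono {R' : ℝ} (hR : R ≤ R') (v : E) :
    secondDiffIntegral μ q R F v ≤ secondDiffIntegral μ q R' F v :=
  lintegral_mono_set (closedBall_subset_closedBall hR)

variable [NormedSpace ℝ E]

lemma ae_norm_snd_fst_smul_fst_le [OpensMeasurableSpace E] (ν : Measure E) (ρ : ℝ) :
    ∀ᵐ p ∂(cond μ (closedBall 0 ρ)).prod (taylorMeasure.prod ν), ‖p.2.1 • p.1‖ ≤ ρ := by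
  have hτ : ∀ᵐ p ∂(cond μ (closedBall 0 ρ)).prod (taylorMeasure.prod ν), p.2.1 ∈ Icc (0 : ℝ) 1 :=
    (Measure.quasiMeasurePreserving_fst.comp Measure.quasiMeasurePreserving_snd).ae
      ae_taylorMeasure_mem_Icc
  have hu : ∀ᵐ p ∂(cond μ (closedBall 0 ρ)).prod (taylorMeasure.prod ν), p.1 ∈ closedBall 0 ρ :=
    Measure.quasiMeasurePreserving_fst.ae <|
      ProbabilityTheory.ae_cond_mem measurableSet_closedBall
  filter_upwards [hτ, hu] with p hτ hu
  rw [norm_smul, Real.norm_of_nonneg hτ.1]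
  exact (mul_le_of_le_one_left (norm_nonneg _) hτ.2).trans (mem_closedBall_zero_iff.1 hu)

/-- The `q`-th power of the normalized `L_q` distance on `closedBall x ρ` from `f` to the set of
affine maps with Lipschitz constant at most `2`. -/
def localAffineError (μ : Measure E) (q : ℝ) (f : E → Y) (x : E) (ρ : ℝ) : ℝ≥0∞ :=
  ⨅ (Λ : E →ᵃ[ℝ] Y) (_ : LipschitzWith 2 Λ),
    (⨍⁻ y in closedBall x ρ, ‖f y - Λ y‖ₑ ^ q ∂μ) / ENNReal.ofReal (ρ ^ q)

variable [BorelSpace E] [FiniteDimensional ℝ E]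

lemma measurable_secondDiffIntegral [SFinite μ] (hF : Continuous F) :
    Measurable (secondDiffIntegral μ q R F) := by
  have hcont : Continuous fun p : E × E ↦ secondDiff F p.1 p.2 :=
    continuous_secondDiff hF continuous_fst continuous_snd
  exact (hcont.enorm.measurable.pow_const q).lintegral_prod_right'

variable [μ.IsAddHaarMeasure] [CompleteSpace Y]

lemma exists_affineMap_lipschitzWith_one_enorm_sub_le (μ : Measure E) [μ.IsAddHaarMeasure]
    [Nontrivial E] (hF : Continuous F) {x : E} {s : ℝ} (hs : 0 < s)
    (hlip : LipschitzOnWith 1 F (closedBall x (3 * s))) :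
    ∃ Λ : E →ᵃ[ℝ] Y, LipschitzWith 1 Λ ∧ ∀ u, ‖u‖ ≤ s / finrank ℝ E →
      ‖F (x + u) - Λ (x + u)‖ₑ ≤
        64 * ∫⁻ τ, ∫⁻ v, ‖secondDiff F (s • v) (x + τ • u)‖ₑ ∂ballSumMeasure μ ∂taylorMeasure := by
  have hG : LipschitzOnWith ‖s‖₊ (fun z ↦ F (s • z)) (closedBall (s⁻¹ • x) 3) := by
    rw [← one_mul ‖s‖₊]
    refine hlip.comp (lipschitzWith_smul s).lipschitzOnWith fun z hz ↦ ?_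
    rw [mem_closedBall_iff_norm] at hz ⊢
    rw [← smul_inv_smul₀ hs.ne' x, ← smul_sub, norm_smul, Real.norm_of_nonneg hs.le, mul_comm]
    gcongr
  obtain ⟨Λ, hΛ, happrox⟩ := exists_affineMap_lipschitzWith_enorm_sub_le μ
    (hF.comp (continuous_const_smul s)) (s⁻¹ • x) hG
  refine ⟨Λ.comp (LinearMap.lsmul ℝ E s⁻¹).toAffineMap, ?_, fun u hu ↦ ?_⟩
  · have hcomp := hΛ.comp (lipschitzWith_smul (β := E) s⁻¹)
    rwa [nnnorm_inv, mul_inv_cancel₀ (nnnorm_ne_zero_iff.2 hs.ne')] at hcomp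
  · have hu' : ‖s⁻¹ • u‖ ≤ 1 / finrank ℝ E := by
      rw [norm_smul, norm_inv, Real.norm_of_nonneg hs.le, inv_mul_le_iff₀ hs, mul_one_div]
      exact hu
    have hle := happrox _ hu'
    simp only [meanSecondDiff, secondDiff_comp_smul, Function.comp_def, smul_add,
      smul_comm s _ (s⁻¹ • u), smul_inv_smul₀ hs.ne'] at hle
    simpa using hle

lemma localAffineError_le [Nontrivial E] (hq : 1 ≤ q) (hF : Continuous F) (hρ : 0 < ρ) {x : E}
    (hlip : LipschitzOnWith 1 F (closedBall x (3 * (ρ * finrank ℝ E)))) :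
    localAffineError μ q F x ρ ≤ 64 ^ q / ENNReal.ofReal (ρ ^ q) *
      ∫⁻ p : E × ℝ × E, ‖secondDiff F ((ρ * finrank ℝ E : ℝ) • p.2.2) (x + p.2.1 • p.1)‖ₑ ^ q
        ∂(cond μ (closedBall 0 ρ)).prod (taylorMeasure.prod (ballSumMeasure μ)) := by
  have hn : (0 : ℝ) < finrank ℝ E := by exact_mod_cast Module.finrank_pos (R := ℝ) (M := E)
  have hmeas : Measurable fun p : E × ℝ × E ↦
      ‖secondDiff F ((ρ * finrank ℝ E : ℝ) • p.2.2) (x + p.2.1 • p.1)‖ₑ :=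
    (continuous_secondDiff hF (by fun_prop) (by fun_prop)).enorm.measurable
  obtain ⟨Λ, hΛ, happrox⟩ :=
    exists_affineMap_lipschitzWith_one_enorm_sub_le μ hF (mul_pos hρ hn) hlip
  have hpow : (64 : ℝ≥0∞) ^ q ≠ ∞ := rpow_ne_top_of_nonneg (by positivity) (by finiteness)
  rw [lintegral_prod _ (hmeas.pow_const q).aemeasurable, ← ENNReal.mul_div_right_comm]
  refine (iInf₂_le Λ (hΛ.weaken one_le_two)).trans ?_
  rw [setLAverage_closedBall_eq_lintegral_cond, ← lintegral_const_mul' _ _ hpow]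
  gcongr ?_ / _
  refine lintegral_mono_ae ?_
  filter_upwards [ProbabilityTheory.ae_cond_mem measurableSet_closedBall] with u hu
  have hu' : ‖u‖ ≤ ρ * finrank ℝ E / finrank ℝ E := by
    rw [mul_div_cancel_right₀ _ hn.ne']
    exact mem_closedBall_zero_iff.1 hu
  have hmeas_u : Measurable fun p : ℝ × E ↦
      ‖secondDiff F ((ρ * finrank ℝ E : ℝ) • p.2) (x + p.1 • u)‖ₑ :=
    (continuous_secondDiff hF (by fun_prop) (by fun_prop)).enorm.measurable
  calc ‖F (x + u) - Λ (x + u)‖ₑ ^ q ≤ (64 * _) ^ q := by gcongr; exact happrox u hu'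
    _ ≤ 64 ^ q * _ := by
      rw [mul_rpow_of_nonneg _ _ (by positivity), ← lintegral_prod _ hmeas_u.aemeasurable]
      gcongr
      exact rpow_lintegral_le_lintegral_rpow hq hmeas_u.aemeasurable

lemma setLIntegral_localAffineError_le [Nontrivial E] (hq : 1 ≤ q) (hF : Continuous F)
    (hρ : 0 < ρ) (hlip : LipschitzOnWith 1 F (closedBall 0 (R + 3 * (ρ * finrank ℝ E)))) :
    ∫⁻ x in closedBall 0 R, localAffineError μ q F x ρ ∂μ ≤ 64 ^ q / ENNReal.ofReal (ρ ^ q) *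
      ∫⁻ v, secondDiffIntegral μ q (R + ρ) F ((ρ * finrank ℝ E : ℝ) • v) ∂ballSumMeasure μ := by
  have hprob := isProbabilityMeasure_cond_closedBall μ hρ
  let π : Measure (E × ℝ × E) :=
    (cond μ (closedBall 0 ρ)).prod (taylorMeasure.prod (ballSumMeasure μ))
  let D (x : E) (p : E × ℝ × E) : ℝ≥0∞ :=
    ‖secondDiff F ((ρ * finrank ℝ E : ℝ) • p.2.2) (x + p.2.1 • p.1)‖ₑ ^ q
  have hD : Measurable (Function.uncurry D) :=
    (continuous_secondDiff hF (by fun_prop) (by fun_prop)).enorm.measurable.pow_const q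
  have hmarg : MeasurePreserving (fun p : E × ℝ × E ↦ p.2.2) π (ballSumMeasure μ) :=
    measurePreserving_snd.comp measurePreserving_snd
  calc ∫⁻ x in closedBall 0 R, localAffineError μ q F x ρ ∂μ
      ≤ ∫⁻ x in closedBall 0 R, 64 ^ q / ENNReal.ofReal (ρ ^ q) * ∫⁻ p, D x p ∂π ∂μ := by
        refine setLIntegral_mono' measurableSet_closedBall fun x hx ↦ localAffineError_le hq hF hρ
          (hlip.mono (closedBall_subset_closedBall' ?_))
        rw [mem_closedBall] at hx
        linarith
    _ = 64 ^ q / ENNReal.ofReal (ρ ^ q) * ∫⁻ p, ∫⁻ x in closedBall 0 R, D x p ∂μ ∂π := by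
        rw [lintegral_const_mul _ hD.lintegral_prod_right, lintegral_lintegral_swap hD.aemeasurable]
    _ ≤ 64 ^ q / ENNReal.ofReal (ρ ^ q) *
          ∫⁻ p, secondDiffIntegral μ q (R + ρ) F ((ρ * finrank ℝ E : ℝ) • p.2.2) ∂π := by
        gcongr 1
        refine lintegral_mono_ae ?_
        filter_upwards [ae_norm_snd_fst_smul_fst_le (ballSumMeasure μ) ρ] with p hp
        have hneg : ‖-(p.2.1 • p.1)‖ ≤ ρ := by rwa [norm_neg]
        refine (setLIntegral_closedBall_le_add_right hneg _).trans_eq ?_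
        simp only [D, secondDiffIntegral, neg_add_cancel_right]
    _ = _ := by
        congr 1
        exact hmarg.lintegral_comp (f := fun v ↦ secondDiffIntegral μ q (R + ρ) F (_ • v))
          ((measurable_secondDiffIntegral hF).comp (measurable_const_smul _))

end SingleScale

section MultiScale

section ScaleInvariantMeasure

lemma setLIntegral_Ioc_mul_left_div_ofReal {a : ℝ} (ha : 0 < a) (c d : ℝ) (g : ℝ → ℝ≥0∞) :
    ∫⁻ ρ in Ioc (a * c) (a * d), g ρ / ENNReal.ofReal ρ =
      ∫⁻ σ in Ioc c d, g (a * σ) / ENNReal.ofReal σ := by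
  have hderiv (σ : ℝ) (_ : σ ∈ Ioc c d) : HasDerivWithinAt (a * ·) a (Ioc c d) σ :=
    (hasDerivAt_const_mul a).hasDerivWithinAt
  rw [← image_mul_left_Ioc ha c d, lintegral_image_eq_lintegral_abs_deriv_mul measurableSet_Ioc
    hderiv (mul_right_injective₀ ha.ne').injOn, abs_of_pos ha]
  simp only [ENNReal.ofReal_mul ha.le, ← mul_div_assoc,
    ENNReal.mul_div_mul_left _ _ (ENNReal.ofReal_pos.2 ha).ne' ofReal_ne_top]

lemma Ioc_subset_iUnion_Ioc_dyadic {T : ℝ} (hT : 0 < T) :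
    Ioc 0 T ⊆ ⋃ k : ℕ, Ioc ((2⁻¹ : ℝ) ^ k * (T / 2)) ((2⁻¹ : ℝ) ^ k * T) := by
  intro ρ ⟨hρ, hρT⟩
  obtain ⟨k, hlt, hle⟩ := exists_nat_pow_near_of_lt_one (div_pos hρ hT) ((div_le_one hT).2 hρT)
    (show (0 : ℝ) < 2⁻¹ by norm_num) (by norm_num)
  refine mem_iUnion.2 ⟨k, ?_, (div_le_iff₀ hT).1 hle⟩
  rwa [lt_div_iff₀ hT, pow_succ, mul_assoc, inv_mul_eq_div] at hlt

lemma setLIntegral_Ioc_half_inv_ofReal_le_one {T : ℝ} (hT : 0 < T) :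
    ∫⁻ σ in Ioc (T / 2) T, (ENNReal.ofReal σ)⁻¹ ≤ 1 := by
  calc ∫⁻ σ in Ioc (T / 2) T, (ENNReal.ofReal σ)⁻¹
      ≤ ∫⁻ _ in Ioc (T / 2) T, (ENNReal.ofReal (T / 2))⁻¹ :=
        setLIntegral_mono' measurableSet_Ioc fun σ hσ ↦ by gcongr; exact hσ.1.le
    _ = 1 := by
        rw [setLIntegral_const, Real.volume_Ioc, sub_eq_of_eq_add (add_halves T).symm]
        exact ENNReal.inv_mul_cancel (by simpa using hT) ofReal_ne_top

lemma setLIntegral_Ioc_div_ofReal_le_of_tsum_le {T : ℝ} (hT : 0 < T) {g : ℝ → ℝ≥0∞}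
    (hg : Measurable g) {C : ℝ≥0∞}
    (hC : ∀ σ ∈ Ioc (T / 2) T, ∑' k : ℕ, g ((2⁻¹ : ℝ) ^ k * σ) ≤ C) :
    ∫⁻ ρ in Ioc 0 T, g ρ / ENNReal.ofReal ρ ≤ C := by
  calc ∫⁻ ρ in Ioc 0 T, g ρ / ENNReal.ofReal ρ
      ≤ ∑' k : ℕ, ∫⁻ ρ in Ioc ((2⁻¹ : ℝ) ^ k * (T / 2)) ((2⁻¹ : ℝ) ^ k * T),
          g ρ / ENNReal.ofReal ρ :=
        (lintegral_mono_set (Ioc_subset_iUnion_Ioc_dyadic hT)).trans (lintegral_iUnion_le _ _)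
    _ = ∑' k : ℕ, ∫⁻ σ in Ioc (T / 2) T, g ((2⁻¹ : ℝ) ^ k * σ) / ENNReal.ofReal σ :=
        tsum_congr fun k ↦ setLIntegral_Ioc_mul_left_div_ofReal (by positivity) _ _ _
    _ = ∫⁻ σ in Ioc (T / 2) T, (∑' k : ℕ, g ((2⁻¹ : ℝ) ^ k * σ)) * (ENNReal.ofReal σ)⁻¹ := by
        rw [← lintegral_tsum fun k ↦ by fun_prop]
        simp only [div_eq_mul_inv, ENNReal.tsum_mul_right]
    _ ≤ ∫⁻ σ in Ioc (T / 2) T, C * (ENNReal.ofReal σ)⁻¹ :=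
        setLIntegral_mono' measurableSet_Ioc fun σ hσ ↦ mul_le_mul_left (hC σ hσ) _
    _ ≤ C := by
        rw [lintegral_const_mul _ (by fun_prop)]
        exact mul_le_of_le_one_right' (setLIntegral_Ioc_half_inv_ofReal_le_one hT)

end ScaleInvariantMeasure


variable {q : ℝ}

lemma ofReal_inv_two_pow_mul_rpow (hq : 0 ≤ q) {σ : ℝ} (hσ : 0 ≤ σ) (k : ℕ) :
    ENNReal.ofReal (((2⁻¹ : ℝ) ^ k * σ) ^ q) =
      (((2 : ℝ≥0∞) ^ k) ^ q)⁻¹ * ENNReal.ofReal (σ ^ q) := by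
  rw [Real.mul_rpow (by positivity) hσ, ENNReal.ofReal_mul (by positivity),
    ← ENNReal.ofReal_rpow_of_nonneg (by positivity) hq, ENNReal.ofReal_pow (by norm_num),
    ENNReal.ofReal_inv_of_pos two_pos, ENNReal.ofReal_ofNat, ← ENNReal.inv_pow, ENNReal.inv_rpow]

variable {E : Type*} [NormedAddCommGroup E] [NormedSpace ℝ E] [FiniteDimensional ℝ E]
  [MeasurableSpace E] [BorelSpace E] {μ : Measure E} [μ.IsAddHaarMeasure]
  {Y : Type*} [NormedAddCommGroup Y] [NormedSpace ℝ Y] [CompleteSpace Y] {m R T : ℝ} {F : E → Y}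

lemma setLIntegral_secondDiffIntegral_div_le (hq : 0 ≤ q) (hm : MartCotypeBound q Y m)
    (hF : Continuous F) (hT : 0 < T) {w : E}
    (hlip : LipschitzOnWith 1 F (closedBall 0 (R + 4 * (T * ‖w‖)))) :
    ∫⁻ ρ in Ioc 0 T,
        secondDiffIntegral μ q R F (ρ • w) / ENNReal.ofReal (ρ ^ q) / ENNReal.ofReal ρ ≤
      ENNReal.ofReal m ^ q * ‖(2 : ℝ) • w‖ₑ ^ q * μ (closedBall 0 (R + 2 * (T * ‖w‖))) := by
  have hmeas : Measurable fun ρ : ℝ ↦ secondDiffIntegral μ q R F (ρ • w) / ENNReal.ofReal (ρ ^ q) :=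
    ((measurable_secondDiffIntegral hF).comp (by fun_prop)).div (by fun_prop)
  refine setLIntegral_Ioc_div_ofReal_le_of_tsum_le hT hmeas fun σ ⟨hσ, hσT⟩ ↦ ?_
  have hσ0 : 0 < σ := (half_pos hT).trans hσ
  have hσq : ENNReal.ofReal (σ ^ q) ≠ 0 := by simpa using Real.rpow_pos_of_pos hσ0 q
  have hnorm : ‖σ • (2 : ℝ) • w‖ = 2 * (σ * ‖w‖) := by
    rw [norm_smul, norm_smul, Real.norm_of_nonneg hσ0.le, Real.norm_two, mul_left_comm]
  have hσw : σ * ‖w‖ ≤ T * ‖w‖ := by gcongr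
  have hterm (k : ℕ) : secondDiffIntegral μ q R F (((2⁻¹ : ℝ) ^ k * σ) • w) /
      ENNReal.ofReal (((2⁻¹ : ℝ) ^ k * σ) ^ q) = ((2 : ℝ≥0∞) ^ k) ^ q *
        secondDiffIntegral μ q R F ((2⁻¹ : ℝ) ^ (k + 1) • σ • (2 : ℝ) • w) *
          (ENNReal.ofReal (σ ^ q))⁻¹ := by
    have hsmul : (2⁻¹ : ℝ) ^ (k + 1) • σ • (2 : ℝ) • w = ((2⁻¹ : ℝ) ^ k * σ) • w := by
      rw [smul_smul, smul_smul]
      ring_nf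
    rw [hsmul, ofReal_inv_two_pow_mul_rpow hq hσ0.le, div_eq_mul_inv,
      ENNReal.mul_inv (.inr ofReal_ne_top) (.inr hσq), inv_inv]
    ring
  have hsum := tsum_setLIntegral_secondDiff_le (μ := μ) (w := σ • (2 : ℝ) • w) (R := R) hq hm hF
    (hlip.mono (closedBall_subset_closedBall (by rw [hnorm]; linarith)))
  simp only [hterm, ENNReal.tsum_mul_right]
  rw [← div_eq_mul_inv]
  refine ENNReal.div_le_of_le_mul (hsum.trans ?_)
  rw [hnorm, enorm_smul, mul_rpow_of_nonneg _ _ hq, Real.enorm_of_nonneg hσ0.le,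
    ENNReal.ofReal_rpow_of_nonneg hσ0.le hq, mul_right_comm _ _ (ENNReal.ofReal _), ← mul_assoc,
    mul_right_comm _ _ (_ ^ q)]
  gcongr

lemma lintegral_setLIntegral_secondDiffIntegral_div_le (hq : 0 ≤ q) (hm : MartCotypeBound q Y m)
    (hF : Continuous F) (hT : 0 < T)
    (hlip : LipschitzOnWith 1 F (closedBall 0 (R + 8 * (T * finrank ℝ E)))) :
    ∫⁻ v, (∫⁻ ρ in Ioc 0 T, secondDiffIntegral μ q R F (ρ • (finrank ℝ E : ℝ) • v) /
        ENNReal.ofReal (ρ ^ q) / ENNReal.ofReal ρ) ∂ballSumMeasure μ ≤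
      ENNReal.ofReal m ^ q * ENNReal.ofReal (4 * finrank ℝ E) ^ q *
        μ (closedBall 0 (R + 4 * (T * finrank ℝ E))) := by
  refine (lintegral_mono_ae ?_).trans_eq ((lintegral_const _).trans (by
    rw [measure_univ, mul_one]))
  filter_upwards [ae_ballSumMeasure_norm_le μ] with v hv
  have hw : ‖(finrank ℝ E : ℝ) • v‖ ≤ 2 * finrank ℝ E := by
    rw [norm_smul, Real.norm_natCast, mul_comm]
    gcongr
  have hTw : T * ‖(finrank ℝ E : ℝ) • v‖ ≤ T * (2 * finrank ℝ E) := by gcongr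
  have henorm : ‖(2 : ℝ) • (finrank ℝ E : ℝ) • v‖ₑ ≤ ENNReal.ofReal (4 * finrank ℝ E) := by
    rw [← ofReal_norm, norm_smul, Real.norm_two]
    exact ENNReal.ofReal_le_ofReal (by linarith)
  have hball : closedBall (0 : E) (R + 2 * (T * ‖(finrank ℝ E : ℝ) • v‖)) ⊆
      closedBall 0 (R + 4 * (T * finrank ℝ E)) := closedBall_subset_closedBall (by linarith)
  refine (setLIntegral_secondDiffIntegral_div_le hq hm hF hT
    (hlip.mono (closedBall_subset_closedBall (by linarith)))).trans ?_
  gcongr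

lemma setLIntegral_localAffineError_div_le [Nontrivial E] (hq : 1 ≤ q) (hF : Continuous F) {ρ : ℝ}
    (hρ : 0 < ρ) (hρT : ρ ≤ T)
    (hlip : LipschitzOnWith 1 F (closedBall 0 (R + 3 * (ρ * finrank ℝ E)))) :
    (∫⁻ x in closedBall 0 R, localAffineError μ q F x ρ ∂μ) / ENNReal.ofReal ρ ≤
      64 ^ q * ∫⁻ v, secondDiffIntegral μ q (R + T) F (ρ • (finrank ℝ E : ℝ) • v) /
        ENNReal.ofReal (ρ ^ q) / ENNReal.ofReal ρ ∂ballSumMeasure μ := by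
  have hρq : 0 < ρ ^ q := Real.rpow_pos_of_pos hρ q
  have hle := setLIntegral_localAffineError_le (μ := μ) hq hF hρ hlip
  simp only [div_eq_mul_inv] at hle ⊢
  rw [lintegral_mul_const' _ _ (by simpa using hρ), lintegral_mul_const' _ _ (by simpa using hρq),
    ← mul_assoc]
  gcongr ?_ * _
  refine hle.trans ?_
  rw [mul_assoc, mul_comm (_⁻¹)]
  gcongr with v
  rw [mul_smul]
  exact secondDiffIntegral_mono (by linarith) _

lemma setLIntegral_setLIntegral_localAffineError_div_le [Nontrivial E] (hq : 1 ≤ q)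
    (hm : MartCotypeBound q Y m) (hF : Continuous F) (hT : 0 < T)
    (hlip : LipschitzOnWith 1 F (closedBall 0 (R + T + 8 * (T * finrank ℝ E)))) :
    ∫⁻ ρ in Ioc 0 T,
        (∫⁻ x in closedBall 0 R, localAffineError μ q F x ρ ∂μ) / ENNReal.ofReal ρ ≤
      64 ^ q * (ENNReal.ofReal m ^ q * ENNReal.ofReal (4 * finrank ℝ E) ^ q *
        μ (closedBall 0 (R + T + 4 * (T * finrank ℝ E)))) := by
  have hpow : (64 : ℝ≥0∞) ^ q ≠ ∞ := rpow_ne_top_of_nonneg (by positivity) (by finiteness)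
  let D (ρ : ℝ) (v : E) : ℝ≥0∞ := secondDiffIntegral μ q (R + T) F (ρ • (finrank ℝ E : ℝ) • v) /
    ENNReal.ofReal (ρ ^ q) / ENNReal.ofReal ρ
  have hD : Measurable (Function.uncurry D) :=
    (((measurable_secondDiffIntegral hF).comp (by fun_prop)).div (by fun_prop)).div (by fun_prop)
  calc ∫⁻ ρ in Ioc 0 T, (∫⁻ x in closedBall 0 R, localAffineError μ q F x ρ ∂μ) / ENNReal.ofReal ρ
      ≤ ∫⁻ ρ in Ioc 0 T, 64 ^ q * ∫⁻ v, D ρ v ∂ballSumMeasure μ := by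
        refine setLIntegral_mono' measurableSet_Ioc fun ρ ⟨hρ, hρT⟩ ↦
          setLIntegral_localAffineError_div_le hq hF hρ hρT
            (hlip.mono (closedBall_subset_closedBall ?_))
        have hρn : ρ * finrank ℝ E ≤ T * finrank ℝ E := by gcongr
        linarith [show 0 ≤ T * finrank ℝ E by positivity]
    _ = 64 ^ q * ∫⁻ v, (∫⁻ ρ in Ioc 0 T, D ρ v) ∂ballSumMeasure μ := by
        rw [lintegral_const_mul' _ _ hpow, lintegral_lintegral_swap hD.aemeasurable]
    _ ≤ _ := by
        gcongr
        exact lintegral_setLIntegral_secondDiffIntegral_div_le (by positivity) hm hF hT hlip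

end MultiScale

section AffineError

lemma setLAverage_le_of_forall_le {α : Type*} [MeasurableSpace α] {μ : Measure α} {s : Set α}
    (hs : MeasurableSet s) {g : α → ℝ≥0∞} {C : ℝ≥0∞} (hg : ∀ x ∈ s, g x ≤ C) :
    ⨍⁻ x in s, g x ∂μ ≤ C := by
  rw [setLAverage_eq]
  exact ENNReal.div_le_of_le_mul
    ((setLIntegral_mono' hs hg).trans_eq (setLIntegral_const s C))

lemma exists_continuous_eqOn_closedBall {E Y : Type*} [NormedAddCommGroup E]
    [NormedSpace ℝ E] [TopologicalSpace Y] {f : E → Y} (hf : ContinuousOn f (closedBall 0 1)) :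
    ∃ F : E → Y, Continuous F ∧ EqOn f F (closedBall 0 1) := by
  have hpos (x : E) : 0 < max 1 ‖x‖ := lt_max_of_lt_left one_pos
  refine ⟨fun x ↦ f ((max 1 ‖x‖)⁻¹ • x), hf.comp_continuous ?_ fun x ↦ ?_, fun x hx ↦ ?_⟩
  · exact ((continuous_const.max continuous_norm).inv₀ fun x ↦ (hpos x).ne').smul continuous_id
  · rw [mem_closedBall_zero_iff, norm_smul, norm_inv, Real.norm_of_nonneg (hpos x).le,
      inv_mul_le_iff₀ (hpos x), mul_one]
    exact le_max_right _ _
  · simp only [max_eq_left (mem_closedBall_zero_iff.1 hx), inv_one, one_smul]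

variable {E : Type*} [NormedAddCommGroup E] [NormedSpace ℝ E] [MeasurableSpace E] {μ : Measure E}
  {Y : Type*} [NormedAddCommGroup Y] [NormedSpace ℝ Y] {q m ρ : ℝ} {f g F : E → Y}

/-- The average over `x` in the ball of radius `1 - 1 / (2 n)`, where `n` is the dimension of `E`,
of `localAffineError μ q f x ρ`. -/
def affineError (μ : Measure E) (q : ℝ) (f : E → Y) (ρ : ℝ) : ℝ≥0∞ :=
  ⨍⁻ x in closedBall 0 (1 - 1 / (2 * finrank ℝ E)), localAffineError μ q f x ρ ∂μ

section OpensMeasurableSpace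

variable [OpensMeasurableSpace E]

lemma localAffineError_congr {x : E} (h : EqOn f g (closedBall x ρ)) :
    localAffineError μ q f x ρ = localAffineError μ q g x ρ := by
  unfold localAffineError
  congr! 4 with Λ
  exact setLAverage_congr_fun measurableSet_closedBall fun y hy ↦ by simp only [h hy]

lemma localAffineError_le_one (hq : 0 ≤ q) (hρ : 0 < ρ) {x : E}
    (hf : LipschitzOnWith 1 f (closedBall x ρ)) : localAffineError μ q f x ρ ≤ 1 := by
  refine (iInf₂_le (AffineMap.const ℝ E (f x)) ((LipschitzWith.const (f x)).weaken zero_le)).trans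
    (ENNReal.div_le_of_le_mul ?_)
  rw [one_mul, ← ENNReal.ofReal_rpow_of_nonneg hρ.le hq]
  refine setLAverage_le_of_forall_le measurableSet_closedBall fun y hy ↦ ?_
  have hle := hf.norm_sub_le hy (mem_closedBall_self hρ.le)
  rw [NNReal.coe_one, one_mul] at hle
  rw [AffineMap.const_apply, ← ofReal_norm]
  gcongr
  exact hle.trans (mem_closedBall_iff_norm.1 hy)

lemma affineError_congr (h : EqOn f g (closedBall 0 1)) (hρ : ρ ≤ 1 / (2 * finrank ℝ E)) :
    affineError μ q f ρ = affineError μ q g ρ :=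
  setLAverage_congr_fun measurableSet_closedBall fun _ hx ↦
    localAffineError_congr (h.mono
      (closedBall_subset_closedBall' (by linarith [mem_closedBall.1 hx])))

lemma affineError_le_one (hq : 0 ≤ q) (hf : LipschitzOnWith 1 f (closedBall 0 1)) (hρ : 0 < ρ)
    (hρn : ρ ≤ 1 / (2 * finrank ℝ E)) : affineError μ q f ρ ≤ 1 :=
  setLAverage_le_of_forall_le measurableSet_closedBall fun _ hx ↦
    localAffineError_le_one hq hρ (hf.mono
      (closedBall_subset_closedBall' (by linarith [mem_closedBall.1 hx])))

lemma setLIntegral_large_scales_affineError_le [FiniteDimensional ℝ E] [Nontrivial E] (hq : 0 ≤ q)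
    (hf : LipschitzOnWith 1 f (closedBall 0 1)) :
    ∫⁻ ρ in Icc (1 / (32 * (finrank ℝ E : ℝ) ^ 2)) (1 / (2 * finrank ℝ E : ℝ)),
      affineError μ q f ρ / ENNReal.ofReal ρ ≤ ENNReal.ofReal (16 * finrank ℝ E) := by
  have hn : (1 : ℝ) ≤ finrank ℝ E := by exact_mod_cast Module.finrank_pos (R := ℝ) (M := E)
  set n : ℝ := (finrank ℝ E : ℝ)
  set T : ℝ := 1 / (32 * n ^ 2) with hT
  have hT₀ : 0 < T := by positivity
  calc ∫⁻ ρ in Icc T (1 / (2 * n)), affineError μ q f ρ / ENNReal.ofReal ρ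
      ≤ ∫⁻ _ in Icc T (1 / (2 * n)), 1 / ENNReal.ofReal T := by
        refine setLIntegral_mono' measurableSet_Icc fun ρ ⟨hTρ, hρ⟩ ↦ ?_
        gcongr
        exact affineError_le_one hq hf (hT₀.trans_le hTρ) hρ
    _ = ENNReal.ofReal (T⁻¹ * (1 / (2 * n) - T)) := by
        rw [setLIntegral_const, Real.volume_Icc, one_div, ← ENNReal.ofReal_inv_of_pos hT₀,
          ← ENNReal.ofReal_mul (by positivity)]
    _ ≤ ENNReal.ofReal (16 * n) := by
        refine ENNReal.ofReal_le_ofReal ((inv_mul_le_iff₀ hT₀).2 ?_)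
        have hTn : T * (16 * n) = 1 / (2 * n) := by rw [hT]; field_simp; norm_num
        linarith

end OpensMeasurableSpace

variable [BorelSpace E] [FiniteDimensional ℝ E] [μ.IsAddHaarMeasure] [Nontrivial E]

lemma measure_closedBall_one_le_two_mul :
    μ (closedBall 0 1) ≤ 2 * μ (closedBall 0 (1 - 1 / (2 * finrank ℝ E))) := by
  have hle := ENNReal.ofReal_le_ofReal (measureReal_closedBall_one_le_two_mul (μ := μ))
  rwa [ENNReal.ofReal_mul zero_le_two, ENNReal.ofReal_ofNat,
    ofReal_measureReal measure_closedBall_lt_top.ne,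
    ofReal_measureReal measure_closedBall_lt_top.ne] at hle

lemma setLIntegral_small_scales_affineError_le [CompleteSpace Y] (hq : 1 ≤ q)
    (hm : MartCotypeBound q Y m) (hF : Continuous F) (hlip : LipschitzOnWith 1 F (closedBall 0 1)) :
    ∫⁻ ρ in Ioc 0 (1 / (32 * (finrank ℝ E : ℝ) ^ 2)), affineError μ q F ρ / ENNReal.ofReal ρ ≤
      2 * (64 ^ q * (ENNReal.ofReal m ^ q * ENNReal.ofReal (4 * finrank ℝ E) ^ q)) := by
  have hn : (1 : ℝ) ≤ finrank ℝ E := by exact_mod_cast Module.finrank_pos (R := ℝ) (M := E)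
  set n : ℝ := (finrank ℝ E : ℝ)
  set T : ℝ := 1 / (32 * n ^ 2) with hT
  have hTn : T * n = 1 / (2 * n) / 16 := by rw [hT]; field_simp; norm_num
  have hT₀ : 0 < T := by positivity
  have hTle : T ≤ T * n := le_mul_of_one_le_right hT₀.le hn
  have hδ : 1 / (2 * n) ≤ 1 / 2 := one_div_le_one_div_of_le two_pos (by linarith)
  set V : ℝ≥0∞ := μ (closedBall 0 (1 - 1 / (2 * n)))
  have hV : V ≠ 0 := (measure_closedBall_pos μ 0 (by linarith)).ne'
  have hV' : V ≠ ∞ := measure_closedBall_lt_top.ne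
  have hball : μ (closedBall 0 (1 - 1 / (2 * n) + T + 4 * (T * n))) ≤ 2 * V :=
    (measure_mono (closedBall_subset_closedBall (by linarith))).trans
      measure_closedBall_one_le_two_mul
  calc ∫⁻ ρ in Ioc 0 T, affineError μ q F ρ / ENNReal.ofReal ρ
      = (∫⁻ ρ in Ioc 0 T, (∫⁻ x in closedBall 0 (1 - 1 / (2 * n)), localAffineError μ q F x ρ ∂μ) /
          ENNReal.ofReal ρ) / V := by
        simp only [affineError, setLAverage_eq, div_eq_mul_inv _ V, mul_comm _ V⁻¹,
          ← lintegral_const_mul' _ _ (ENNReal.inv_ne_top.2 hV), ← mul_div_assoc, n, V]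
    _ ≤ 64 ^ q * (ENNReal.ofReal m ^ q * ENNReal.ofReal (4 * n) ^ q * (2 * V)) / V := by
        gcongr
        refine (setLIntegral_setLIntegral_localAffineError_div_le hq hm hF hT₀
          (hlip.mono (closedBall_subset_closedBall ?_))).trans ?_
        · linarith
        · gcongr
    _ = 2 * (64 ^ q * (ENNReal.ofReal m ^ q * ENNReal.ofReal (4 * n) ^ q)) * V / V := by ring_nf
    _ = _ := ENNReal.mul_div_cancel_right hV hV'

lemma setLIntegral_affineError_div_le [CompleteSpace Y] (hq : 1 ≤ q) (hm₀ : 0 ≤ m)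
    (hm : MartCotypeBound q Y m) (hf : LipschitzOnWith 1 f (closedBall 0 1)) :
    ∫⁻ ρ in Ioc 0 (1 / (2 * finrank ℝ E : ℝ)), affineError μ q f ρ / ENNReal.ofReal ρ ≤
      ENNReal.ofReal (2 * (256 * m * finrank ℝ E) ^ q + 16 * finrank ℝ E) := by
  obtain ⟨F, hF, hfF⟩ := exists_continuous_eqOn_closedBall hf.continuousOn
  have hFlip : LipschitzOnWith 1 F (closedBall 0 1) := fun x hx y hy ↦ by
    rw [← hfF hx, ← hfF hy]
    exact hf hx hy
  have hq₀ : 0 ≤ q := by positivity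
  have hconst : 2 * (64 ^ q * (ENNReal.ofReal m ^ q * ENNReal.ofReal (4 * finrank ℝ E) ^ q)) =
      ENNReal.ofReal (2 * (256 * m * finrank ℝ E) ^ q) := by
    rw [← mul_rpow_of_nonneg _ _ hq₀, ← mul_rpow_of_nonneg _ _ hq₀, ← ENNReal.ofReal_mul hm₀,
      ENNReal.ofReal_mul zero_le_two, ← ENNReal.ofReal_rpow_of_nonneg (by positivity) hq₀,
      show (64 : ℝ≥0∞) = ENNReal.ofReal 64 by simp, ← ENNReal.ofReal_mul (by norm_num),
      ENNReal.ofReal_ofNat]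
    ring_nf
  calc ∫⁻ ρ in Ioc 0 (1 / (2 * finrank ℝ E : ℝ)), affineError μ q f ρ / ENNReal.ofReal ρ
      = ∫⁻ ρ in Ioc 0 (1 / (2 * finrank ℝ E : ℝ)), affineError μ q F ρ / ENNReal.ofReal ρ :=
        setLIntegral_congr_fun measurableSet_Ioc fun ρ hρ ↦ by
          simp only [affineError_congr hfF hρ.2]
    _ ≤ ∫⁻ ρ in Ioc 0 (1 / (32 * (finrank ℝ E : ℝ) ^ 2)) ∪
          Icc (1 / (32 * (finrank ℝ E : ℝ) ^ 2)) (1 / (2 * finrank ℝ E : ℝ)),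
          affineError μ q F ρ / ENNReal.ofReal ρ :=
        lintegral_mono_set fun ρ hρ ↦
          (le_total ρ _).imp (fun h ↦ ⟨hρ.1, h⟩) fun h ↦ ⟨h, hρ.2⟩
    _ ≤ _ := lintegral_union_le _ _ _
    _ ≤ ENNReal.ofReal (2 * (256 * m * finrank ℝ E) ^ q) + ENNReal.ofReal (16 * finrank ℝ E) :=
        add_le_add ((setLIntegral_small_scales_affineError_le hq hm hF hFlip).trans_eq hconst)
          (setLIntegral_large_scales_affineError_le hq₀ hFlip)
    _ = _ := (ENNReal.ofReal_add (by positivity) (by positivity)).symm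

end AffineError

section Constants

variable {n : ℕ} {q m I T r : ℝ}

lemma half_le_plog (hn : 0 < n) : 1 / 2 ≤ plog n := by
  unfold plog
  split_ifs with h
  · norm_num
  · have hn₂ : (2 : ℝ) ≤ n := by exact_mod_cast (by omega : 2 ≤ n)
    linarith [Real.log_le_log two_pos hn₂, Real.log_two_gt_d9]

lemma scale_mem_Ioo_and_le (hn : 0 < n) (hI : 1 / 16 ≤ I) :
    1 / 12 / ((n : ℝ) ^ ((5 : ℝ) / 4) * √(I * plog n)) ∈ Ioo 0 1 ∧
      1 / 12 / ((n : ℝ) ^ ((5 : ℝ) / 4) * √(I * plog n)) ≤ 1 / (2 * n) := by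
  have hn₁ : (1 : ℝ) ≤ n := by exact_mod_cast hn
  have hsqrt : 1 / 6 ≤ √(I * plog n) :=
    Real.le_sqrt_of_sq_le (by nlinarith [half_le_plog hn])
  have hrpow : (n : ℝ) ≤ (n : ℝ) ^ ((5 : ℝ) / 4) := Real.self_le_rpow_of_one_le hn₁ (by norm_num)
  have hle : 1 / 12 / ((n : ℝ) ^ ((5 : ℝ) / 4) * √(I * plog n)) ≤ 1 / (2 * n) := by
    calc _ ≤ 1 / 12 / ((n : ℝ) * (1 / 6)) := by gcongr
      _ = 1 / (2 * n) := by field_simp; norm_num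
  exact ⟨⟨by positivity, hle.trans_lt ((div_lt_one (by positivity)).2 (by linarith))⟩, hle⟩

lemma mul_mul_le_mul_scale (hn : 0 < n) (hm : 0 ≤ m) (hI : 1 / 16 ≤ I) :
    2304 * m * n ≤ 9 * (1024 * (n : ℝ) ^ ((1 : ℝ) / 4) * m * √I) * n := by
  have hn₁ : (1 : ℝ) ≤ n := by exact_mod_cast hn
  have hsqrt : 1 / 4 ≤ √I := Real.le_sqrt_of_sq_le (by linarith)
  have hrpow : 1 ≤ (n : ℝ) ^ ((1 : ℝ) / 4) := Real.one_le_rpow hn₁ (by norm_num)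
  calc 2304 * m * n = 9 * (1024 * 1 * m * (1 / 4)) * n := by ring
    _ ≤ _ := by gcongr

lemma two_mul_rpow_add_le_half_rpow {d : ℝ} (hd : 1 ≤ d) (hm : 1 ≤ m) (hq : 1 ≤ q) :
    2 * (256 * m * d) ^ q + 16 * d ≤ (2304 * m * d) ^ q / 2 := by
  have hd_le : 16 * d ≤ 256 * m * d := by nlinarith
  have hself : 256 * m * d ≤ (256 * m * d) ^ q :=
    Real.self_le_rpow_of_one_le (by linarith) hq
  have hnine : 9 ≤ (9 : ℝ) ^ q := Real.self_le_rpow_of_one_le (by norm_num) hq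
  rw [show 2304 * m * d = 9 * (256 * m * d) by ring,
    Real.mul_rpow (by norm_num) (by linarith : 0 ≤ 256 * m * d)]
  nlinarith

lemma half_abs_log_le_log_div (hT : T ∈ Ioo 0 1) (hr : 0 < r) (hrT : r ≤ T ^ 2) :
    0 < |Real.log r| / 2 ∧ |Real.log r| / 2 ≤ Real.log (T / r) := by
  have hlogT := Real.log_neg hT.1 hT.2
  have hlogr : Real.log r ≤ 2 * Real.log T := by
    simpa only [Real.log_pow, Nat.cast_ofNat] using Real.log_le_log hr hrT
  rw [Real.log_div hT.1.ne' hr.ne', abs_of_neg (by linarith)]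
  constructor <;> linarith

end Constants

section Bound

variable {E : Type*} [NormedAddCommGroup E] [NormedSpace ℝ E] [MeasurableSpace E] {μ : Measure E}
  {Y : Type*} [NormedAddCommGroup Y] [NormedSpace ℝ Y] {q m : ℝ} {f : E → Y}

lemma affineError_of_subsingleton [Subsingleton Y] (hq : 0 < q) (ρ : ℝ) :
    affineError μ q f ρ = 0 := by
  have hlocal (x : E) : localAffineError μ q f x ρ = 0 :=
    le_bot_iff.1 <| iInf₂_le_of_le 0 (fun x y ↦ by simp) <| by
      simp [Subsingleton.elim (f _) 0, hq]
  simp [affineError, hlocal]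

lemma setLIntegral_affineError_div_le_rpow [BorelSpace E] [FiniteDimensional ℝ E]
    [μ.IsAddHaarMeasure] [Nontrivial E] [CompleteSpace Y] (hq : 1 ≤ q) (hm₀ : 0 ≤ m)
    (hm : MartCotypeBound q Y m) (hf : LipschitzOnWith 1 f (closedBall 0 1)) :
    ∫⁻ ρ in Ioc 0 (1 / (2 * finrank ℝ E : ℝ)), affineError μ q f ρ / ENNReal.ofReal ρ ≤
      ENNReal.ofReal ((2304 * m * finrank ℝ E) ^ q / 2) := by
  rcases subsingleton_or_nontrivial Y with hY | hY
  · simp [affineError_of_subsingleton (zero_lt_one.trans_le hq)]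
  · exact (setLIntegral_affineError_div_le hq hm₀ hm hf).trans <|
      ENNReal.ofReal_le_ofReal <| two_mul_rpow_add_le_half_rpow
        (by exact_mod_cast Module.finrank_pos (R := ℝ) (M := E))
        (one_le_of_martCotypeBound (zero_lt_one.trans_le hq) hm) hq

end Bound

section Transfer

lemma exists_linearEquiv_norm_eq {V : Type u} [AddCommGroup V] [Module ℝ V] {N : V → ℝ}
    (hN : IsNorm N) : ∃ (X : Type u) (_ : NormedAddCommGroup X) (_ : NormedSpace ℝ X)
      (e : V ≃ₗ[ℝ] X), ∀ x, ‖e x‖ = N x := by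
  obtain ⟨hN₀, hsmul, hadd⟩ := hN
  let normV : NormedAddCommGroup V := AddGroupNorm.toNormedAddCommGroup
    { toFun := N
      map_zero' := by simpa using hsmul 0 0
      add_le' := hadd
      neg' := fun x ↦ by simpa using hsmul (-1) x
      eq_zero_of_map_eq_zero' := hN₀ }
  exact ⟨V, normV, { norm_smul_le := fun a x ↦ (hsmul a x).le }, .refl ℝ V, fun _ ↦ rfl⟩

lemma exists_continuousLinearEquiv_eq_norm {V : Type u} [NormedAddCommGroup V] [NormedSpace ℝ V]
    [FiniteDimensional ℝ V] {N : V → ℝ} (hN : IsNorm N) :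
    ∃ (X : Type u) (_ : NormedAddCommGroup X) (_ : NormedSpace ℝ X) (e : V ≃L[ℝ] X),
      N = fun x ↦ ‖e x‖ := by
  obtain ⟨X, _, _, e, he⟩ := exists_linearEquiv_norm_eq hN
  exact ⟨X, _, _, e.toContinuousLinearEquiv, funext fun x ↦ (he x).symm⟩

lemma setLAverage_map {α β : Type*} [MeasurableSpace α] [MeasurableSpace β] {φ : α → β}
    (hφ : MeasurableEmbedding φ) (μ : Measure α) (s : Set β) (g : β → ℝ≥0∞) :
    ⨍⁻ y in s, g y ∂μ.map φ = ⨍⁻ x in φ ⁻¹' s, g (φ x) ∂μ := by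
  rw [setLAverage_eq, setLAverage_eq, hφ.map_apply, hφ.restrict_map, hφ.lintegral_map]

variable {V X Y : Type*} [NormedAddCommGroup V] [NormedSpace ℝ V]
  [NormedAddCommGroup X] [NormedSpace ℝ X] [NormedAddCommGroup Y]
  (e : V ≃L[ℝ] X) {f : V → Y} {q m ρ : ℝ}

lemma lipschitzOnWith_comp_symm
    (hf : ∀ x, ‖e x‖ ≤ 1 → ∀ y, ‖e y‖ ≤ 1 → ‖f x - f y‖ ≤ ‖e (x - y)‖) :
    LipschitzOnWith 1 (f ∘ e.symm) (closedBall 0 1) :=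
  lipschitzOnWith_iff_norm_sub_le.2 fun x hx y hy ↦ by
    simpa using hf (e.symm x) (by simpa using hx) (e.symm y) (by simpa using hy)

variable [NormedSpace ℝ Y] [MeasurableSpace V] [BorelSpace V] (ν : Measure V)

section BorelSpace

variable [MeasurableSpace X] [BorelSpace X]

lemma iInf_setLAverage_le_localAffineError (x : V) :
    ⨅ Λ ∈ {Λ : V →ᵃ[ℝ] Y | ∀ u v, ‖Λ u - Λ v‖ ≤ 2 * ‖e (u - v)‖},
      (⨍⁻ y in {y | ‖e (y - x)‖ ≤ ρ}, ‖f y - Λ y‖ₑ ^ q ∂ν) / ENNReal.ofReal (ρ ^ q) ≤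
    localAffineError (ν.map e) q (f ∘ e.symm) (e x) ρ := by
  have hball : {y | ‖e (y - x)‖ ≤ ρ} = e ⁻¹' closedBall (e x) ρ := by ext y; simp [dist_eq_norm]
  refine le_iInf₂ fun Λ hΛ ↦ iInf₂_le_of_le (Λ.comp e.toLinearMap.toAffineMap)
    (fun u v ↦ ?_) (le_of_eq ?_)
  · rw [map_sub]
    exact hΛ.norm_sub_le (e u) (e v)
  · rw [hball, setLAverage_map (φ := e) e.toHomeomorph.measurableEmbedding]
    simp

lemma setLAverage_iInf_le_affineError :
    ⨍⁻ x in {x | ‖e x‖ ≤ 1 - 1 / (2 * finrank ℝ V)},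
      ⨅ Λ ∈ {Λ : V →ᵃ[ℝ] Y | ∀ u v, ‖Λ u - Λ v‖ ≤ 2 * ‖e (u - v)‖},
        (⨍⁻ y in {y | ‖e (y - x)‖ ≤ ρ}, ‖f y - Λ y‖ₑ ^ q ∂ν) / ENNReal.ofReal (ρ ^ q) ∂ν ≤
    affineError (ν.map e) q (f ∘ e.symm) ρ := by
  have hball : {x | ‖e x‖ ≤ 1 - 1 / (2 * finrank ℝ V)} =
      e ⁻¹' closedBall 0 (1 - 1 / (2 * finrank ℝ X)) := by
    ext x; simp [e.toLinearEquiv.finrank_eq]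
  rw [affineError, setLAverage_map (φ := e) e.toHomeomorph.measurableEmbedding, hball]
  exact lintegral_mono fun x ↦ iInf_setLAverage_le_localAffineError e ν x

end BorelSpace

lemma setLIntegral_setLAverage_iInf_div_le_rpow [FiniteDimensional ℝ V] [Nontrivial V]
    [ν.IsAddHaarMeasure] [CompleteSpace Y] (hq : 1 ≤ q) (hm₀ : 0 ≤ m) (hm : MartCotypeBound q Y m)
    (hf : ∀ x, ‖e x‖ ≤ 1 → ∀ y, ‖e y‖ ≤ 1 → ‖f x - f y‖ ≤ ‖e (x - y)‖) :
    ∫⁻ ρ in Ioc 0 (1 / (2 * finrank ℝ V : ℝ)),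
      (⨍⁻ x in {x | ‖e x‖ ≤ 1 - 1 / (2 * finrank ℝ V)},
        ⨅ Λ ∈ {Λ : V →ᵃ[ℝ] Y | ∀ u v, ‖Λ u - Λ v‖ ≤ 2 * ‖e (u - v)‖},
          (⨍⁻ y in {y | ‖e (y - x)‖ ≤ ρ}, ‖f y - Λ y‖ₑ ^ q ∂ν) / ENNReal.ofReal (ρ ^ q) ∂ν) /
        ENNReal.ofReal ρ ≤
      ENNReal.ofReal ((2304 * m * finrank ℝ V) ^ q / 2) := by
  borelize X
  have : FiniteDimensional ℝ X := e.toLinearEquiv.finiteDimensional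
  have : Nontrivial X := e.injective.nontrivial
  have hbound := setLIntegral_affineError_div_le_rpow (μ := ν.map e) hq hm₀ hm
    (lipschitzOnWith_comp_symm e hf)
  rw [← e.toLinearEquiv.finrank_eq] at hbound
  refine (lintegral_mono fun ρ ↦ ?_).trans hbound
  gcongr
  exact setLAverage_iInf_le_affineError e ν

end Transfer

end Dorronsoro

/-- **Theorem (local vector-valued Dorronsoro estimate).** -/
theorem statement4 :
    ∃ c κ : ℝ, 0 < c ∧ c < 1 / 4 ∧ 2 ≤ κ ∧
      ∀ (q : ℝ), 2 ≤ q → ∀ (n : ℕ), 0 < n →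
      ∀ (N : EuclideanSpace ℝ (Fin n) → ℝ), IsNorm N →
      ∀ (Y : Type u) [NormedAddCommGroup Y] [NormedSpace ℝ Y] [CompleteSpace Y],
      ∀ m : ℝ, 0 ≤ m → MartCotypeBound q Y m →
      ∀ K T : ℝ,
        K = κ * (n : ℝ) ^ ((1 : ℝ) / 4) * m * Real.sqrt (IqX q N * MX N) →
        T = c / ((n : ℝ) ^ ((5 : ℝ) / 4) * Real.sqrt (IqX q N * MX N * plog n)) →
        T ≤ 1 / (2 * n) ∧
        ∀ f : EuclideanSpace ℝ (Fin n) → Y,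
          (∀ x, N x ≤ 1 → ∀ y, N y ≤ 1 → ‖f x - f y‖ ≤ N (x - y)) →
          ∀ r : ℝ, 0 < r → r ≤ T ^ 2 →
            (∫⁻ ρ in Set.Icc r T,
                (((∫⁻ x in {x : EuclideanSpace ℝ (Fin n) | N x ≤ 1 - 1 / (2 * n)},
                    ⨅ Λ ∈ {Λ : EuclideanSpace ℝ (Fin n) →ᵃ[ℝ] Y |
                        ∀ u v, ‖Λ u - Λ v‖ ≤ 2 * N (u - v)},
                      ((∫⁻ y in {y : EuclideanSpace ℝ (Fin n) | N (y - x) ≤ ρ},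
                          (‖f y - Λ y‖₊ : ℝ≥0∞) ^ q)
                        / volume {y : EuclideanSpace ℝ (Fin n) | N (y - x) ≤ ρ})
                        / ENNReal.ofReal (ρ ^ q))
                  / volume {x : EuclideanSpace ℝ (Fin n) | N x ≤ 1 - 1 / (2 * n)})
                  / ENNReal.ofReal ρ))
              / ENNReal.ofReal (Real.log (T / r))
            ≤ ENNReal.ofReal ((9 * K * n) ^ q / |Real.log r|) := by
  refine ⟨1 / 12, 1024, by norm_num, by norm_num, by norm_num, ?_⟩
  intro q hq n hn N hN Y _ _ _ m hm₀ hm K T hK hT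
  obtain ⟨X, _, _, e, rfl⟩ := Dorronsoro.exists_continuousLinearEquiv_eq_norm hN
  have : NeZero n := ⟨hn.ne'⟩
  have hq₁ : 1 ≤ q := one_le_two.trans hq
  have hI : 1 / 16 ≤ IqX q (fun x ↦ ‖e x‖) * MX fun x ↦ ‖e x‖ :=
    Dorronsoro.inv_sixteen_le_moment_mul_average e volume hq₁
  obtain ⟨hT₀₁, hTn⟩ := hT ▸ Dorronsoro.scale_mem_Ioo_and_le hn hI
  refine ⟨hTn, fun f hf r hr hrT ↦ ?_⟩
  obtain ⟨hlog₀, hlog⟩ := Dorronsoro.half_abs_log_le_log_div hT₀₁ hr hrT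
  have hK' : 2304 * m * n ≤ 9 * K * n := hK ▸ Dorronsoro.mul_mul_le_mul_scale hn hm₀ hI
  have hbound := Dorronsoro.setLIntegral_setLAverage_iInf_div_le_rpow e volume hq₁ hm₀ hm hf
  simp only [finrank_euclideanSpace_fin, setLAverage_eq] at hbound
  calc _ ≤ ENNReal.ofReal ((9 * K * n) ^ q / 2) / ENNReal.ofReal (|Real.log r| / 2) := by
        gcongr
        exact (lintegral_mono_set (Icc_subset_Ioc hr hTn)).trans (hbound.trans (by gcongr))
    _ = ENNReal.ofReal ((9 * K * n) ^ q / |Real.log r|) := by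
        rw [← ENNReal.ofReal_div_of_pos hlog₀, div_div_div_cancel_right₀ two_ne_zero]
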